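/- arXiv:1701.02168 — 2 statements merged into one kernel-verified Lean document; each statement's English description precedes it below -/
import Mathlib

section
/- There is a polynomial p such that for every n > 0 there exists a Streett automaton with costs A_n of size at most p(n), over the alphabet Σ_I × Σ_O with Σ_I = {0,1} ∪ {0,1}×{#} and Σ_O = {0,1} ∪ {0,1}×{◄,►}, such that: (i) there is a delay function f and a winning strategy τ_O for Player O in Γ_f(L(A_n)) with Cst(τ_O) = n; and (ii) for every delay function f, if Player O has a winning strategy τ_O for Γ_f(L(A_n)) with Cst(τ_O) = n, then f eventually grants a lookahead of size n·(2^{2^n} − 1). -/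
attribute [local instance] Classical.propDecidable

noncomputable section

/-- A Streett automaton with costs: states `Q`, alphabet `A`, index set `J` of Streett pairs
`(req j, res j)`, and one cost function `Cst j` per pair (`true` = increment). -/
structure StreettCost (Q A J : Type) where
  qI : Q
  δ : Q → A → Q
  req : J → Set Q
  res : J → Set Q
  Cst : J → Q → A → Bool

namespace StreettCost

variable {Q A J : Type}

/-- The state reached after processing the first `n` letters of `w` starting in `q0`. -/
def stateAt (M : StreettCost Q A J) (q0 : Q) (w : ℕ → A) : ℕ → Q
  | 0 => q0
  | n + 1 => M.δ (stateAt M q0 w n) (w n)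

/-- The number of `Cst j`-increment-transitions between positions `m` and `n`. -/
def segCost (M : StreettCost Q A J) (j : J) (q0 : Q) (w : ℕ → A) (m n : ℕ) : ℕ :=
  ((Finset.Ico m n).filter fun i => M.Cst j (stateAt M q0 w i) (w i) = true).card

/-- The cost-of-response of pair `j` at position `n`. -/
def StCorJ (M : StreettCost Q A J) (j : J) (q0 : Q) (w : ℕ → A) (n : ℕ) : ℕ∞ :=
  if stateAt M q0 w n ∈ M.req j then
    sInf { c : ℕ∞ | ∃ n', n ≤ n' ∧ stateAt M q0 w n' ∈ M.res j ∧
      c = (segCost M j q0 w n n' : ℕ∞) }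
  else 0

/-- The aggregated cost-of-response at position `n`. -/
def StCor (M : StreettCost Q A J) (q0 : Q) (w : ℕ → A) (n : ℕ) : ℕ∞ :=
  ⨆ j : J, StCorJ M j q0 w n

/-- The run of `M` on `w` starting in `q0` satisfies the Streett condition with costs. -/
def Accepting (M : StreettCost Q A J) (q0 : Q) (w : ℕ → A) : Prop :=
  Filter.limsup (fun n => StCor M q0 w n) Filter.atTop < ⊤

/-- The language of `M`. -/
def Lang (M : StreettCost Q A J) : Set (ℕ → A) := { w | Accepting M M.qI w }

end StreettCost

section DelayGames

variable {I O : Type}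

/-- The `n`-th letter of the concatenation `u 0 ++ u 1 ++ u 2 ++ ⋯`
(well-defined whenever all blocks are non-empty). -/
def flatWord [Inhabited I] (u : ℕ → List I) (n : ℕ) : I :=
  (((List.range (n + 1)).map u).flatten).getD n default

/-- A delay function maps every round to a positive number of letters. -/
def DelayFn (f : ℕ → ℕ) : Prop := ∀ i, 0 < f i

/-- The constant delay function `f_k` with `f_k 0 = k + 1` and `f_k i = 1` for `i > 0`. -/
def constDF (k : ℕ) : ℕ → ℕ := fun i => if i = 0 then k + 1 else 1

/-- The sequence of letters Player I has produced up to (and including) round `i`. -/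
def oHist (u : ℕ → List I) (i : ℕ) : List I := ((List.range (i + 1)).map u).flatten

/-- `τO` is a winning strategy for Player O in the delay game with delay function `f`
and winning condition `L`. -/
def OWinning [Inhabited I] (f : ℕ → ℕ) (L : Set (ℕ → I × O)) (τO : List I → O) : Prop :=
  ∀ u : ℕ → List I, ∀ v : ℕ → O,
    (∀ i, (u i).length = f i) →
    (∀ i, v i = τO (oHist u i)) →
    (fun n => (flatWord u n, v n)) ∈ L

/-- Player O wins the delay game `Γ_f(L)`. -/
def OWins [Inhabited I] (f : ℕ → ℕ) (L : Set (ℕ → I × O)) : Prop :=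
  ∃ τO : List I → O, OWinning f L τO

/-- `τI` is a winning strategy for Player I in the delay game with delay function `f`
and winning condition `L`. -/
def IWinning [Inhabited I] (f : ℕ → ℕ) (L : Set (ℕ → I × O)) (τI : List O → List I) : Prop :=
  (∀ w, (τI w).length = f w.length) ∧
  ∀ u : ℕ → List I, ∀ v : ℕ → O,
    (∀ i, u i = τI ((List.range i).map v)) →
    (fun n => (flatWord u n, v n)) ∉ L

/-- Player I wins the delay game `Γ_f(L)`. -/
def IWins [Inhabited I] (f : ℕ → ℕ) (L : Set (ℕ → I × O)) : Prop :=
  ∃ τI : List O → List I, IWinning f L τI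

/-- The cost of a strategy `τO` of Player O: the supremum of the word-costs `wc` of the
outcomes of plays consistent with `τO`. -/
def stratCost [Inhabited I] (wc : (ℕ → I × O) → ℕ∞) (f : ℕ → ℕ) (τO : List I → O) : ℕ∞ :=
  ⨆ (u : ℕ → List I) (v : ℕ → O)
    (_ : (∀ i, (u i).length = f i) ∧ ∀ i, v i = τO (oHist u i)),
    wc (fun n => (flatWord u n, v n))

/-- An optimal winning strategy for Player O in `Γ_f(L)` exists and has cost `c`. -/
def OptimalCostIs [Inhabited I] (L : Set (ℕ → I × O)) (wc : (ℕ → I × O) → ℕ∞)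
    (f : ℕ → ℕ) (c : ℕ∞) : Prop :=
  (∃ τO, OWinning f L τO ∧ stratCost wc f τO = c) ∧
  ∀ τO, OWinning f L τO → c ≤ stratCost wc f τO

end DelayGames

/-- The cost `limsup_n StCor(ρ(w), n)` of the run of `M` on an infinite word `w`. -/
def StreettCost.wCost {Q I O J : Type} (M : StreettCost Q (I × O) J) : (ℕ → I × O) → ℕ∞ :=
  fun w => Filter.limsup (fun n => StreettCost.StCor M M.qI w n) Filter.atTop

/-!
A *bad pair* of a sequence consists of two equal entries with no larger entry between them. A
sequence with `k` values has a bad pair among its first `2 ^ k` entries, whereas the ruler sequence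
has none and stays below `k` for `2 ^ k - 1` entries.

Between two marks `#`, Player I spells numbers in blocks of `n` bits, so that `k = 2 ^ n`, and
Player O has to spell in every block one and the same number, the value of a bad pair. A small
automaton cannot store that number, but for every position `i` of a block and every bit `b` it can
charge one unit for each output of a bit other than `b` at position `i` after an output of `b`.
Once the announced number has formed a bad pair, a countdown of cost `n` answers all requests. A
strategy of cost `n` thus may not deviate from the announced number when a countdown follows.

If Player O sees the next `2 ^ 2 ^ n` blocks, she can announce a correct number. If she sees fewer
than `2 ^ 2 ^ n - 1` blocks, Player I first spells the ruler sequence and then only repeats the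
negation of the first bit she has output. Her first announcement then never forms a bad pair, so
either no countdown ever follows, or a deviation raises the cost to `n + 1`; in the second case
Player I plays `#` and starts afresh.
-/

namespace StreettCost

section Runs

variable {Q A J : Type} (M : StreettCost Q A J)

theorem stateAt_congr (q : Q) {w w' : ℕ → A} {t : ℕ} (h : ∀ r < t, w r = w' r) :
    M.stateAt q w t = M.stateAt q w' t := by
  induction t with
  | zero => rfl
  | succ t ih =>
    rw [stateAt, stateAt, ih fun r hr => h r (hr.trans t.lt_succ_self), h t t.lt_succ_self]

theorem segCost_self (j : J) (q : Q) (w : ℕ → A) (a : ℕ) : M.segCost j q w a a = 0 := by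
  simp [segCost]

theorem segCost_succ (j : J) (q : Q) (w : ℕ → A) (a : ℕ) :
    M.segCost j q w a (a + 1) = (M.Cst j (M.stateAt q w a) (w a)).toNat := by
  rw [segCost, Nat.Ico_succ_singleton, Finset.filter_singleton]
  cases M.Cst j (M.stateAt q w a) (w a) <;> simp

theorem segCost_add_segCost (j : J) (q : Q) (w : ℕ → A) {a b c : ℕ} (hab : a ≤ b) (hbc : b ≤ c) :
    M.segCost j q w a b + M.segCost j q w b c = M.segCost j q w a c := by
  unfold segCost
  rw [← Finset.Ico_union_Ico_eq_Ico hab hbc, Finset.filter_union, Finset.card_union_of_disjoint]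
  exact Finset.disjoint_filter_filter (Finset.Ico_disjoint_Ico_consecutive a b c)

theorem segCost_eq_zero (j : J) (q : Q) (w : ℕ → A) {a b : ℕ}
    (h : ∀ r, a ≤ r → r < b → M.Cst j (M.stateAt q w r) (w r) = false) :
    M.segCost j q w a b = 0 := by
  rw [segCost, Finset.card_eq_zero, Finset.filter_eq_empty_iff]
  intro r hr
  rw [Finset.mem_Ico] at hr
  simp [h r hr.1 hr.2]

theorem StCor_le (q : Q) (w : ℕ → A) (t c : ℕ)
    (h : ∀ j, M.stateAt q w t ∈ M.req j →
      ∃ t', t ≤ t' ∧ M.stateAt q w t' ∈ M.res j ∧ M.segCost j q w t t' ≤ c) :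
    M.StCor q w t ≤ c := by
  refine iSup_le fun j => ?_
  unfold StCorJ
  split_ifs with hreq
  · obtain ⟨t', hle, hres, hcost⟩ := h j hreq
    exact le_trans (sInf_le ⟨t', hle, hres, rfl⟩) (by exact_mod_cast hcost)
  · simp

theorem le_StCor (q : Q) (w : ℕ → A) (t c : ℕ) (j : J) (hreq : M.stateAt q w t ∈ M.req j)
    (h : ∀ t', t ≤ t' → M.stateAt q w t' ∈ M.res j → c ≤ M.segCost j q w t t') :
    (c : ℕ∞) ≤ M.StCor q w t := by
  refine le_iSup_of_le j ?_
  rw [StCorJ, if_pos hreq]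
  refine le_sInf ?_
  rintro _ ⟨t', hle, hres, rfl⟩
  exact_mod_cast h t' hle hres

end Runs

section Transport

variable {Q Q' A J J' : Type} {M : StreettCost Q A J} {M' : StreettCost Q' A J'}

theorem map_stateAt (h : Q → Q') (hδ : ∀ q a, h (M.δ q a) = M'.δ (h q) a) (q : Q) (w : ℕ → A)
    (t : ℕ) : h (M.stateAt q w t) = M'.stateAt (h q) w t := by
  induction t with
  | zero => rfl
  | succ t ih => simp only [stateAt, hδ, ih]

theorem StCor_map (h : Q → Q') (e : J ≃ J') (hδ : ∀ q a, h (M.δ q a) = M'.δ (h q) a)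
    (hreq : ∀ j q, q ∈ M.req j ↔ h q ∈ M'.req (e j))
    (hres : ∀ j q, q ∈ M.res j ↔ h q ∈ M'.res (e j))
    (hCst : ∀ j q a, M.Cst j q a = M'.Cst (e j) (h q) a) (q : Q) (w : ℕ → A) (t : ℕ) :
    M.StCor q w t = M'.StCor (h q) w t := by
  have hstate := map_stateAt h hδ q w
  have hseg : ∀ j a b, M.segCost j q w a b = M'.segCost (e j) (h q) w a b := fun j a b => by
    simp only [segCost, hCst, hstate]
  rw [StCor, StCor, ← e.iSup_comp]
  simp only [StCorJ, hreq, hres, hstate, hseg]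

theorem exists_fin_of_invariant [Fintype J] (M : StreettCost Q A J) (S : Finset Q)
    (hqI : M.qI ∈ S) (hδ : ∀ q ∈ S, ∀ a, M.δ q a ∈ S) :
    ∃ M' : StreettCost (Fin S.card) A (Fin (Fintype.card J)),
      ∀ w t, M'.StCor M'.qI w t = M.StCor M.qI w t := by
  let e := S.equivFin
  let eJ := Fintype.equivFin J
  let M' : StreettCost (Fin S.card) A (Fin (Fintype.card J)) :=
    { qI := e ⟨M.qI, hqI⟩
      δ := fun q a => e ⟨M.δ (e.symm q) a, hδ _ (e.symm q).2 a⟩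
      req := fun j => {q | (e.symm q : Q) ∈ M.req (eJ.symm j)}
      res := fun j => {q | (e.symm q : Q) ∈ M.res (eJ.symm j)}
      Cst := fun j q a => M.Cst (eJ.symm j) (e.symm q) a }
  refine ⟨M', fun w t => ?_⟩
  rw [StCor_map (M' := M) (fun q => (e.symm q : Q)) eJ.symm (fun q a => by simp [M'])
    (fun _ _ => Iff.rfl) (fun _ _ => Iff.rfl) (fun _ _ _ => rfl)]
  simp [M']

end Transport

section Words

variable {Q I O J : Type}

theorem wCost_congr {Q' J' : Type} {M : StreettCost Q (I × O) J} {M' : StreettCost Q' (I × O) J'}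
    (h : ∀ w t, M.StCor M.qI w t = M'.StCor M'.qI w t) : M.wCost = M'.wCost :=
  funext fun w => by simp only [wCost, h]

theorem Lang_eq (M : StreettCost Q (I × O) J) : M.Lang = {w | M.wCost w < ⊤} := rfl

theorem wCost_le (M : StreettCost Q (I × O) J) {w : ℕ → I × O} {c : ℕ∞}
    (h : ∀ t, M.StCor M.qI w t ≤ c) : M.wCost w ≤ c :=
  Filter.limsup_le_of_le (by isBoundedDefault) (Filter.Eventually.of_forall h)

theorem le_wCost (M : StreettCost Q (I × O) J) {w : ℕ → I × O} {c : ℕ∞}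
    (h : ∀ T, ∃ t, T ≤ t ∧ c ≤ M.StCor M.qI w t) : c ≤ M.wCost w :=
  Filter.le_limsup_of_frequently_le (Filter.frequently_atTop.2 h) (by isBoundedDefault)

end Words

end StreettCost

/-! ### Plays as lookahead-bounded responses -/

section Plays

variable {I O : Type}

theorem oHist_succ (u : ℕ → List I) (t : ℕ) : oHist u (t + 1) = oHist u t ++ u (t + 1) := by
  simp [oHist, List.range_succ (n := t + 1)]

theorem length_oHist {f : ℕ → ℕ} {u : ℕ → List I} (hu : ∀ i, (u i).length = f i) (t : ℕ) :
    (oHist u t).length = ∑ i ∈ Finset.range (t + 1), f i := by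
  induction t with
  | zero => simp [oHist, hu]
  | succ t ih => rw [oHist_succ, List.length_append, ih, hu, Finset.sum_range_succ _ (t + 1)]

theorem oHist_isPrefix (u : ℕ → List I) {s t : ℕ} (h : s ≤ t) : oHist u s <+: oHist u t := by
  induction t, h using Nat.le_induction with
  | base => exact List.prefix_rfl
  | succ t _ ih => exact oHist_succ u t ▸ ih.trans (List.prefix_append _ _)

theorem DelayFn.le_sum_range {f : ℕ → ℕ} (hf : DelayFn f) (t : ℕ) :
    t ≤ ∑ i ∈ Finset.range t, f i := by
  simpa using Finset.card_nsmul_le_sum (Finset.range t) f 1 fun i _ => hf i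

theorem oHist_eq_map_flatWord [Inhabited I] {f : ℕ → ℕ} (hf : DelayFn f) {u : ℕ → List I}
    (hu : ∀ i, (u i).length = f i) (t : ℕ) :
    oHist u t = (List.range (∑ i ∈ Finset.range (t + 1), f i)).map (flatWord u) := by
  refine List.ext_getElem (by simp [length_oHist hu]) fun m hm _ => ?_
  have hm' : m < (oHist u m).length := by
    rw [length_oHist hu]
    exact hf.le_sum_range (m + 1)
  have hflat : flatWord u m = (oHist u m)[m] := List.getD_eq_getElem _ _ hm'
  rw [List.getElem_map, List.getElem_range, hflat]
  rcases le_total t m with h | h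
  · exact (oHist_isPrefix u h).getElem hm
  · exact ((oHist_isPrefix u h).getElem hm').symm

theorem exists_blocks_flatWord_eq [Inhabited I] {f : ℕ → ℕ} (hf : DelayFn f) (α : ℕ → I) :
    ∃ u : ℕ → List I, (∀ i, (u i).length = f i) ∧ flatWord u = α := by
  let u : ℕ → List I := fun i => (List.range (f i)).map fun r => α (∑ k ∈ Finset.range i, f k + r)
  have hist : ∀ t, oHist u t = (List.range (∑ k ∈ Finset.range (t + 1), f k)).map α := by
    intro t
    induction t with
    | zero => simp [oHist, u]
    | succ t ih =>
      rw [oHist_succ, ih, Finset.sum_range_succ _ (t + 1), List.range_add, List.map_append,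
        List.map_map]
      rfl
  refine ⟨u, fun i => by simp [u], funext fun m => ?_⟩
  change (oHist u m).getD m default = α m
  rw [hist, List.getD_eq_getElem _ _ (by simpa using hf.le_sum_range (m + 1))]
  simp

/-- The word produced when Player I plays `α` and Player O plays `β`. -/
def pairWord (α : ℕ → I) (β : ℕ → O) : ℕ → I × O := fun t => (α t, β t)

/-- Player O's output word against the input word `α` when following `τO` in a game with delay
function `f`: in round `t` she has seen the first `f 0 + ⋯ + f t` letters of `α`. -/
def response (f : ℕ → ℕ) (τO : List I → O) (α : ℕ → I) (t : ℕ) : O :=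
  τO ((List.range (∑ i ∈ Finset.range (t + 1), f i)).map α)

theorem forall_play_iff [Inhabited I] {f : ℕ → ℕ} (hf : DelayFn f) (τO : List I → O)
    (P : (ℕ → I × O) → Prop) :
    (∀ (u : ℕ → List I) (v : ℕ → O), ((∀ i, (u i).length = f i) ∧ ∀ i, v i = τO (oHist u i)) →
      P (fun t => (flatWord u t, v t))) ↔ ∀ α, P (pairWord α (response f τO α)) := by
  constructor
  · intro h α
    obtain ⟨u, hu, rfl⟩ := exists_blocks_flatWord_eq hf α
    exact h u _ ⟨hu, fun i => by rw [response, ← oHist_eq_map_flatWord hf hu]⟩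
  · rintro h u v ⟨hu, hv⟩
    have hresp : v = response f τO (flatWord u) := funext fun i => by
      rw [hv i, response, ← oHist_eq_map_flatWord hf hu]
    exact hresp ▸ h (flatWord u)

theorem OWinning_iff_response [Inhabited I] {f : ℕ → ℕ} (hf : DelayFn f) (L : Set (ℕ → I × O))
    (τO : List I → O) : OWinning f L τO ↔ ∀ α, pairWord α (response f τO α) ∈ L := by
  simp only [← forall_play_iff hf τO (· ∈ L), OWinning, and_imp]

theorem stratCost_eq_iSup_response [Inhabited I] {f : ℕ → ℕ} (hf : DelayFn f)
    (wc : (ℕ → I × O) → ℕ∞) (τO : List I → O) :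
    stratCost wc f τO = ⨆ α, wc (pairWord α (response f τO α)) := by
  refine eq_of_forall_ge_iff fun c => ?_
  simp only [stratCost, iSup_le_iff, ← forall_play_iff hf τO (wc · ≤ c)]

/-- `g` maps input words to output words in such a way that the output at `t` depends only on
the first `t + k` input letters. -/
def HasLookahead (k : ℕ) (g : (ℕ → I) → ℕ → O) : Prop :=
  ∀ ⦃α α' : ℕ → I⦄ ⦃t : ℕ⦄, (∀ r < t + k, α r = α' r) → g α t = g α' t

theorem hasLookahead_response {f : ℕ → ℕ} {k : ℕ}
    (hk : ∀ t, ∑ i ∈ Finset.range (t + 1), f i ≤ t + k) (τO : List I → O) :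
    HasLookahead k (response f τO) := fun α α' t h => by
  refine congrArg τO (List.map_congr_left fun r hr => h r ?_)
  exact (List.mem_range.1 hr).trans_le (hk t)

theorem delayFn_constDF (k : ℕ) : DelayFn (constDF k) := fun i => by
  unfold constDF
  split_ifs <;> omega

theorem sum_range_constDF (k t : ℕ) : ∑ i ∈ Finset.range (t + 1), constDF k i = t + (k + 1) := by
  rw [Finset.sum_range_succ']
  simp [constDF]

theorem HasLookahead.exists_response_eq [Inhabited I] {k : ℕ} {g : (ℕ → I) → ℕ → O}
    (hg : HasLookahead (k + 1) g) : ∃ τO, response (constDF k) τO = g := by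
  refine ⟨fun h => g (fun m => h.getD m default) (h.length - (k + 1)), ?_⟩
  funext α t
  simp only [response, sum_range_constDF, List.length_map, List.length_range, Nat.add_sub_cancel]
  refine hg fun r hr => ?_
  rw [List.getD_eq_getElem _ _ (by simpa using hr)]
  simp

theorem sum_range_le_of_sum_sub_one_lt {f : ℕ → ℕ} (hf : DelayFn f) {k t : ℕ}
    (h : ∑ i ∈ Finset.range (t + 1), (f i - 1) < k) :
    ∑ i ∈ Finset.range (t + 1), f i ≤ t + k := by
  have hsum : ∑ i ∈ Finset.range (t + 1), f i =
      ∑ i ∈ Finset.range (t + 1), (f i - 1) + (t + 1) := by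
    calc ∑ i ∈ Finset.range (t + 1), f i
        = ∑ i ∈ Finset.range (t + 1), ((f i - 1) + 1) :=
          Finset.sum_congr rfl fun i _ => (Nat.sub_add_cancel (hf i)).symm
      _ = _ := by simp [Finset.sum_add_distrib]
  omega

theorem exists_causal_fixedPoint [Inhabited I] (H : ℕ → (ℕ → I) → I)
    (hH : ∀ l α α', (∀ m < l, α m = α' m) → H l α = H l α') : ∃ α, ∀ l, α l = H l α := by
  let α : ℕ → I := Nat.lt_wfRel.wf.fix fun l previous =>
    H l fun m => if h : m < l then previous m h else default
  refine ⟨α, fun l => ?_⟩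
  rw [show α l = _ from WellFounded.fix_eq _ _ l]
  exact hH l _ _ fun m hm => dif_pos hm

end Plays

/-! ### Bad pairs -/

/-- Positions `p < q` carry the same value and no larger value occurs between them. -/
def IsBadPair (X : ℕ → ℕ) (p q : ℕ) : Prop :=
  p < q ∧ X p = X q ∧ ∀ r, p < r → r < q → X r ≤ X q

theorem IsBadPair.congr {X X' : ℕ → ℕ} {p q : ℕ} (h : IsBadPair X p q)
    (hX : ∀ r, p ≤ r → r ≤ q → X r = X' r) : IsBadPair X' p q := by
  obtain ⟨hpq, heq, hle⟩ := h
  refine ⟨hpq, ?_, fun r hpr hrq => ?_⟩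
  · rw [← hX p le_rfl hpq.le, ← hX q hpq.le le_rfl, heq]
  · rw [← hX r hpr.le hrq.le, ← hX q hpq.le le_rfl]
    exact hle r hpr hrq

theorem exists_isBadPair (k : ℕ) (X : ℕ → ℕ) (o : ℕ) (hX : ∀ m, o ≤ m → m < o + 2 ^ k → X m < k) :
    ∃ p q, o ≤ p ∧ q < o + 2 ^ k ∧ IsBadPair X p q := by
  induction k generalizing o with
  | zero => exact absurd (hX o le_rfl (by simp)) (by simp)
  | succ k ih =>
    rw [pow_succ] at hX ⊢
    by_cases hleft : ∀ m, o ≤ m → m < o + 2 ^ k → X m < k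
    · obtain ⟨p, q, hp, hq, hpq⟩ := ih o hleft
      exact ⟨p, q, hp, by omega, hpq⟩
    by_cases hright : ∀ m, o + 2 ^ k ≤ m → m < o + 2 ^ k + 2 ^ k → X m < k
    · obtain ⟨p, q, hp, hq, hpq⟩ := ih (o + 2 ^ k) hright
      exact ⟨p, q, (Nat.le_add_right _ _).trans hp, by omega, hpq⟩
    -- The maximal value `k` occurs in both halves.
    push Not at hleft hright
    obtain ⟨a, hoa, hao, hka⟩ := hleft
    obtain ⟨b, hob, hbo, hkb⟩ := hright
    have ha := hX a hoa (by omega)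
    have hb := hX b (by omega) (by omega)
    refine ⟨a, b, hoa, by omega, by omega, by omega, fun r har hrb => ?_⟩
    have := hX r (by omega) (by omega)
    omega

theorem exists_padicValNat_two_lt {a b : ℕ} (ha : a ≠ 0) (hab : a < b)
    (h : padicValNat 2 a = padicValNat 2 b) :
    ∃ c, a < c ∧ c < b ∧ padicValNat 2 b < padicValNat 2 c := by
  have hb : b ≠ 0 := by omega
  have hodd : ∀ c x : ℕ, c ≠ 0 → c = 2 ^ padicValNat 2 c * x → ¬ 2 ∣ x := by
    rintro c x hc hx ⟨y, rfl⟩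
    refine pow_succ_padicValNat_not_dvd (p := 2) hc ⟨y, ?_⟩
    rw [pow_succ, mul_assoc]
    exact hx
  obtain ⟨x, hx⟩ := pow_padicValNat_dvd (p := 2) (n := a)
  obtain ⟨y, hy⟩ := pow_padicValNat_dvd (p := 2) (n := b)
  have hx2 := hodd a x ha hx
  have hy2 := hodd b y hb hy
  rw [h] at hx
  generalize padicValNat 2 b = v at h hx hy ⊢
  have hpos : 0 < 2 ^ v := by positivity
  have hxy : x < y := lt_of_mul_lt_mul_left (hx ▸ hy ▸ hab) hpos.le
  refine ⟨2 ^ v * (x + 1), ?_, ?_, ?_⟩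
  · rw [hx]
    exact Nat.mul_lt_mul_of_pos_left x.lt_succ_self hpos
  · rw [hy]
    exact Nat.mul_lt_mul_of_pos_left (by omega) hpos
  · rw [← Nat.succ_le_iff, ← padicValNat_dvd_iff_le (by positivity), Nat.succ_eq_add_one, pow_succ]
    exact mul_dvd_mul_left _ (by omega)

/-- The ruler sequence `0, 1, 0, 2, 0, 1, 0, 3, …`, a sequence without bad pairs. -/
def ruler (m : ℕ) : ℕ := padicValNat 2 (m + 1)

theorem not_isBadPair_ruler (p q : ℕ) : ¬ IsBadPair ruler p q := by
  rintro ⟨hpq, heq, hle⟩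
  obtain ⟨c, hpc, hcq, hlt⟩ :=
    exists_padicValNat_two_lt p.succ_ne_zero (Nat.succ_lt_succ hpq) heq
  obtain ⟨r, rfl⟩ := Nat.exists_eq_succ_of_ne_zero (Nat.ne_zero_of_lt hpc)
  exact (hle r (by omega) (by omega)).not_gt hlt

theorem ruler_lt {k m : ℕ} (hm : m < 2 ^ k - 1) : ruler m < k := by
  have hdvd : 2 ^ ruler m ∣ m + 1 := pow_padicValNat_dvd
  exact (Nat.pow_lt_pow_iff_right one_lt_two).1
    ((Nat.le_of_dvd m.succ_pos hdvd).trans_lt (by omega))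

/-- Position `q` completes a bad pair of value `v`. -/
def BadPairEndsAt (X : ℕ → ℕ) (v q : ℕ) : Prop := X q = v ∧ ∃ p, IsBadPair X p q

theorem BadPairEndsAt.congr {X X' : ℕ → ℕ} {v q : ℕ} (h : BadPairEndsAt X v q)
    (hX : ∀ r ≤ q, X r = X' r) : BadPairEndsAt X' v q := by
  obtain ⟨hv, p, hpq⟩ := h
  exact ⟨(hX q le_rfl).symm.trans hv, p, hpq.congr fun r _ hr => hX r hr⟩

/-- The value `v` occurs before position `m` and no larger value has occurred since. -/
def Pending (X : ℕ → ℕ) (v m : ℕ) : Prop := ∃ p < m, X p = v ∧ ∀ r, p < r → r < m → X r ≤ v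

theorem not_pending_zero (X : ℕ → ℕ) (v : ℕ) : ¬ Pending X v 0 := by
  rintro ⟨p, hp, -⟩
  exact p.not_lt_zero hp

theorem pending_succ_iff {X : ℕ → ℕ} {v m : ℕ} :
    Pending X v (m + 1) ↔ X m = v ∨ Pending X v m ∧ X m ≤ v := by
  constructor
  · rintro ⟨p, hp, hpv, hle⟩
    rcases (Nat.lt_succ_iff.1 hp).eq_or_lt with rfl | hpm
    · exact Or.inl hpv
    · exact Or.inr ⟨⟨p, hpm, hpv, fun r hpr hrm => hle r hpr (hrm.trans m.lt_succ_self)⟩,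
        hle m hpm m.lt_succ_self⟩
  · rintro (hv | ⟨⟨p, hp, hpv, hle⟩, hm⟩)
    · exact ⟨m, m.lt_succ_self, hv, fun r hmr hrm => by omega⟩
    · refine ⟨p, hp.trans m.lt_succ_self, hpv, fun r hpr hrm => ?_⟩
      rcases (Nat.lt_succ_iff.1 hrm).eq_or_lt with rfl | hrm'
      · exact hm
      · exact hle r hpr hrm'

theorem badPairEndsAt_iff_pending {X : ℕ → ℕ} {v q : ℕ} :
    BadPairEndsAt X v q ↔ Pending X v q ∧ X q = v := by
  constructor
  · rintro ⟨rfl, p, hpq, heq, hle⟩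
    exact ⟨⟨p, hpq, heq, hle⟩, rfl⟩
  · rintro ⟨⟨p, hpq, heq, hle⟩, rfl⟩
    exact ⟨rfl, p, hpq, heq, hle⟩

/-- The least value of a bad pair among the first `N` positions (`0` if there is none). -/
def badValue (N : ℕ) (X : ℕ → ℕ) : ℕ := sInf {v | ∃ q < N, BadPairEndsAt X v q}

theorem exists_badPairEndsAt_badValue {k : ℕ} {X : ℕ → ℕ} (hX : ∀ m, X m < k) :
    ∃ q < 2 ^ k, BadPairEndsAt X (badValue (2 ^ k) X) q := by
  obtain ⟨p, q, -, hq, hpq⟩ := exists_isBadPair k X 0 fun m _ _ => hX m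
  exact Nat.sInf_mem (s := {v | ∃ q < 2 ^ k, BadPairEndsAt X v q})
    ⟨X q, q, by simpa using hq, rfl, p, hpq⟩

theorem badValue_congr {N : ℕ} {X X' : ℕ → ℕ} (h : ∀ m < N, X m = X' m) :
    badValue N X = badValue N X' := by
  refine congrArg sInf (Set.ext fun v => exists_congr fun q => and_congr_right fun hq => ?_)
  have hle : ∀ r ≤ q, X r = X' r := fun r hr => h r (hr.trans_lt hq)
  exact ⟨fun hv => hv.congr hle, fun hv => hv.congr fun r hr => (hle r hr).symm⟩

/-! ### Binary prefixes -/

/-- The number whose binary digits are `b 0, …, b (i - 1)`, least significant digit first. -/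
def prefixVal (b : ℕ → Bool) (i : ℕ) : ℕ := Nat.ofBits fun r : Fin i => b r

theorem prefixVal_zero (b : ℕ → Bool) : prefixVal b 0 = 0 := rfl

theorem prefixVal_succ (b : ℕ → Bool) (i : ℕ) :
    prefixVal b (i + 1) = prefixVal b i + (b i).toNat * 2 ^ i := by
  induction i generalizing b with
  | zero => simp [prefixVal, Nat.ofBits_succ]
  | succ i ih =>
    have hshift : ∀ j, prefixVal b (j + 1) = 2 * prefixVal (fun r => b (r + 1)) j + (b 0).toNat :=
      fun j => Nat.ofBits_succ _
    rw [hshift (i + 1), ih, hshift i, pow_succ]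
    ring

theorem prefixVal_lt (b : ℕ → Bool) (i : ℕ) : prefixVal b i < 2 ^ i := Nat.ofBits_lt_two_pow _

theorem prefixVal_congr {b b' : ℕ → Bool} {i : ℕ} (h : ∀ r < i, b r = b' r) :
    prefixVal b i = prefixVal b' i :=
  congrArg Nat.ofBits (funext fun r : Fin i => h r r.2)

theorem prefixVal_testBit {v i : ℕ} (hv : v < 2 ^ i) : prefixVal v.testBit i = v :=
  (Nat.ofBits_testBit v i).trans (Nat.mod_eq_of_lt hv)

theorem testBit_prefixVal {i r : ℕ} (b : ℕ → Bool) (hr : r < i) :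
    (prefixVal b i).testBit r = b r :=
  Nat.testBit_ofBits_lt _ r hr

theorem decide_prefixVal_eq_succ (x b : ℕ → Bool) (i : ℕ) :
    decide (prefixVal x (i + 1) = prefixVal b (i + 1)) =
      (decide (prefixVal x i = prefixVal b i) && (x i == b i)) := by
  have hx := prefixVal_lt x i
  have hb := prefixVal_lt b i
  rw [prefixVal_succ, prefixVal_succ]
  cases x i <;> cases b i <;> simp <;> omega

theorem decide_prefixVal_le_succ (x b : ℕ → Bool) (i : ℕ) :
    decide (prefixVal x (i + 1) ≤ prefixVal b (i + 1)) =
      if x i = b i then decide (prefixVal x i ≤ prefixVal b i) else b i := by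
  have hx := prefixVal_lt x i
  have hb := prefixVal_lt b i
  rw [prefixVal_succ, prefixVal_succ]
  cases x i <;> cases b i <;> simp <;> omega

/-! ### The automaton -/

namespace BadPairGame

/-- Player I's letters: `inl x` is a plain bit, `inr x` a bit carrying the mark `#`. -/
abbrev InputLetter := Bool ⊕ Bool

/-- Player O's letters: `inl y` is a plain bit, `inr (y, d)` a bit carrying an arrow `d`. -/
abbrev OutputLetter := Bool ⊕ (Bool × Bool)

/-- The bit of an unmarked input letter; the automaton ignores the bit of a marked one. -/
def inputBit (a : InputLetter) : Bool := a.elim id fun _ => false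

/-- The bit of a plain output letter; the automaton does not use arrows, and a letter carrying one
counts as the bit `0`. -/
def outputBit (o : OutputLetter) : Bool := o.elim id fun _ => false

/-- What the automaton remembers while it compares the `n`-bit blocks written by Player I with the
number announced by Player O, which is never stored: `pending` tells whether the announced number
has occurred among the previous blocks without a larger one since, `eq` and `le` compare the part
of the current block read so far with the corresponding part of the announced number, and `bit`
is Player O's last bit, read at position `pos` of the block. -/
structure Scan where
  pending : Bool
  eq : Bool
  le : Bool
  bit : Bool
  pos : ℕ

/-- The states of the automaton: at the start of a round, comparing blocks, or, once the announced
number has formed a bad pair, counting down to the next response. -/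
inductive RoundState where
  | start
  | scan (σ : Scan)
  | closing (c : ℕ)

/-- Reading the input bit `x` and the output bit `o` at position `pos` of a block. -/
def readBit (pending eq le : Bool) (pos : ℕ) (x o : Bool) : RoundState :=
  .scan ⟨pending, eq && (x == o), if x = o then le else o, o, pos⟩

/-- The transition of the automaton on an unmarked letter with input bit `x` and output bit `o`,
for blocks of `n` bits. -/
def RoundState.next (n : ℕ) (q : RoundState) (x o : Bool) : RoundState :=
  match q with
  | .start => readBit false true true 0 x o
  | .scan σ =>
    if σ.pos + 1 < n then readBit σ.pending σ.eq σ.le (σ.pos + 1) x o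
    else if (σ.pending && σ.eq) = true then .closing n
    else readBit (σ.eq || (σ.pending && σ.le)) true true 0 x o
  | .closing 0 => .closing n
  | .closing (c + 1) => .closing c

/-- The transition function of the automaton; the mark `#` starts a new round. -/
def RoundState.step (n : ℕ) (q : RoundState) (a : InputLetter) (o : OutputLetter) : RoundState :=
  if a.isRight = true then .start else q.next n (inputBit a) (outputBit o)

/-- The automaton for blocks of `n` bits. The pair `(i, b)` is requested whenever Player O outputs
`b` at position `i` of a block, and pays for every later block in which she deviates from `b` at
that position. All pairs are requested when the countdown from `n` starts, pay for every step of
it, and are answered at its end or by the start of a new round. -/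
def badPairAutomaton (n : ℕ) :
    StreettCost RoundState (InputLetter × OutputLetter) (Fin n × Bool) where
  qI := .start
  δ q a := q.step n a.1 a.2
  req j := {q | (∃ σ : Scan, q = .scan σ ∧ σ.pos = j.1 ∧ σ.bit = j.2) ∨ q = .closing n}
  res _ := {.start, .closing 0}
  Cst j q a := decide ((∃ c, q = .closing (c + 1)) ∨
    ∃ σ : Scan, q.step n a.1 a.2 = .scan σ ∧ σ.pos = j.1 ∧ σ.bit ≠ j.2)

/-- The states the automaton can reach. -/
def RoundState.reachable (n : ℕ) : Finset RoundState :=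
  {.start} ∪ (Finset.range (n + 1)).image .closing ∪
    (Finset.univ ×ˢ Finset.range n).image fun p : (Bool × Bool × Bool × Bool) × ℕ =>
      .scan ⟨p.1.1, p.1.2.1, p.1.2.2.1, p.1.2.2.2, p.2⟩

namespace RoundState

theorem scan_mem_reachable {n : ℕ} {σ : Scan} : .scan σ ∈ reachable n ↔ σ.pos < n := by
  cases σ
  simp [reachable]

theorem closing_mem_reachable {n c : ℕ} : .closing c ∈ reachable n ↔ c ≤ n := by
  simp [reachable]

theorem start_mem_reachable (n : ℕ) : .start ∈ reachable n := by
  simp [reachable]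

theorem step_mem_reachable {n : ℕ} (hn : 0 < n) {q : RoundState} (hq : q ∈ reachable n)
    (a : InputLetter) (o : OutputLetter) : q.step n a o ∈ reachable n := by
  unfold step
  split_ifs with ha
  · exact start_mem_reachable n
  · rcases q with _ | σ | _ | c
    · exact scan_mem_reachable.2 hn
    · simp only [next, readBit]
      split_ifs <;> simp_all only [scan_mem_reachable, closing_mem_reachable, le_refl]
    · exact closing_mem_reachable.2 le_rfl
    · exact closing_mem_reachable.2 ((Nat.le_succ c).trans (closing_mem_reachable.1 hq))

theorem card_reachable_le (n : ℕ) : (reachable n).card ≤ 17 * n + 2 := by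
  have hclosing : ((Finset.range (n + 1)).image closing).card ≤ n + 1 :=
    Finset.card_image_le.trans (Finset.card_range _).le
  have hscan : ((Finset.univ ×ˢ Finset.range n).image
      fun p : (Bool × Bool × Bool × Bool) × ℕ =>
        scan ⟨p.1.1, p.1.2.1, p.1.2.2.1, p.1.2.2.2, p.2⟩).card ≤ 16 * n :=
    Finset.card_image_le.trans (by simp [Finset.card_product])
  refine (Finset.card_union_le _ _).trans ?_
  have := Finset.card_union_le {start} ((Finset.range (n + 1)).image closing)
  rw [Finset.card_singleton] at this
  omega

end RoundState

theorem exists_fin_badPairAutomaton {n : ℕ} (hn : 0 < n) :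
    ∃ m kJ : ℕ, ∃ M : StreettCost (Fin m) (InputLetter × OutputLetter) (Fin kJ),
      m + kJ ≤ 19 * n + 2 ∧ M.wCost = (badPairAutomaton n).wCost := by
  obtain ⟨M, hM⟩ := (badPairAutomaton n).exists_fin_of_invariant (RoundState.reachable n)
    (RoundState.start_mem_reachable n) fun q hq a => RoundState.step_mem_reachable hn hq a.1 a.2
  refine ⟨_, _, M, ?_, StreettCost.wCost_congr hM⟩
  have := RoundState.card_reachable_le n
  simp only [Fintype.card_prod, Fintype.card_fin, Fintype.card_bool]
  omega

/-! ### Rounds -/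

/-- No input letter at the positions `a, …, b - 1` carries the mark `#`. -/
def Unmarked (α : ℕ → InputLetter) (a b : ℕ) : Prop :=
  ∀ t, a ≤ t → t < b → (α t).isRight = false

theorem Unmarked.mono {α : ℕ → InputLetter} {a b a' b' : ℕ} (h : Unmarked α a b) (ha : a ≤ a')
    (hb : b' ≤ b) : Unmarked α a' b' :=
  fun t hat htb => h t (ha.trans hat) (htb.trans_le hb)

section Run

/-- The state of the automaton after `t` letters. -/
def state (n : ℕ) (α : ℕ → InputLetter) (β : ℕ → OutputLetter) (t : ℕ) : RoundState :=
  (badPairAutomaton n).stateAt .start (pairWord α β) t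

variable {n : ℕ} {α : ℕ → InputLetter} {β : ℕ → OutputLetter}

theorem state_succ_of_marked {t : ℕ} (h : (α t).isRight = true) :
    state n α β (t + 1) = .start := if_pos h

theorem state_succ_of_unmarked {t : ℕ} (h : (α t).isRight = false) :
    state n α β (t + 1) = (state n α β t).next n (inputBit (α t)) (outputBit (β t)) :=
  if_neg (ne_true_of_eq_false h)

theorem state_mem_reachable (hn : 0 < n) (t : ℕ) : state n α β t ∈ RoundState.reachable n := by
  induction t with
  | zero => exact RoundState.start_mem_reachable n
  | succ t ih => exact RoundState.step_mem_reachable hn ih _ _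

theorem state_succ_ne_start {t : ℕ} (h : (α t).isRight = false) :
    state n α β (t + 1) ≠ .start := by
  rw [state_succ_of_unmarked h]
  rcases state n α β t with _ | σ | _ | c
  · exact RoundState.noConfusion
  · simp only [RoundState.next, readBit]
    split_ifs <;> exact RoundState.noConfusion
  · exact RoundState.noConfusion
  · exact RoundState.noConfusion

theorem state_ne_start {s t : ℕ} (h : Unmarked α s t) (hst : s < t) : state n α β t ≠ .start := by
  obtain ⟨r, rfl⟩ := Nat.exists_eq_succ_of_ne_zero (Nat.ne_zero_of_lt hst)
  exact state_succ_ne_start (h r (Nat.lt_succ_iff.1 hst) r.lt_succ_self)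

theorem unmarked_of_state_succ_eq_scan {t : ℕ} {σ : Scan} (h : state n α β (t + 1) = .scan σ) :
    (α t).isRight = false := by
  by_contra hmark
  rw [state_succ_of_marked (by simpa using hmark)] at h
  cases h

theorem state_succ_of_closing_zero {t : ℕ} (h : (α t).isRight = false)
    (hc : state n α β t = .closing 0) : state n α β (t + 1) = .closing n := by
  rw [state_succ_of_unmarked h, hc]
  rfl

theorem state_succ_of_closing_succ {t c : ℕ} (h : (α t).isRight = false)
    (hc : state n α β t = .closing (c + 1)) : state n α β (t + 1) = .closing c := by
  rw [state_succ_of_unmarked h, hc]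
  rfl

theorem exists_closing_of_le {a b : ℕ} (hab : a ≤ b) (h : Unmarked α a b)
    (hc : ∃ c, state n α β a = .closing c) : ∃ c, state n α β b = .closing c := by
  induction b, hab using Nat.le_induction with
  | base => exact hc
  | succ b hab ih =>
    have hb := h b hab b.lt_succ_self
    obtain ⟨_ | c, hbc⟩ := ih (h.mono le_rfl b.le_succ)
    · exact ⟨n, state_succ_of_closing_zero hb hbc⟩
    · exact ⟨c, state_succ_of_closing_succ hb hbc⟩

theorem state_eq_closing_zero {a c : ℕ} (h : Unmarked α a (a + c))
    (hc : state n α β a = .closing c) : state n α β (a + c) = .closing 0 := by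
  induction c generalizing a with
  | zero => exact hc
  | succ c ih =>
    rw [Nat.add_succ, ← Nat.succ_add] at h ⊢
    exact ih (h.mono a.le_succ le_rfl)
      (state_succ_of_closing_succ (h a le_rfl (by omega)) hc)

theorem exists_scan_of_le {s r t : ℕ} (h : Unmarked α s t) (hsr : s < r) (hrt : r ≤ t)
    (ht : ∃ σ, state n α β t = .scan σ) : ∃ σ, state n α β r = .scan σ := by
  rcases hr : state n α β r with _ | σ | c
  · exact absurd hr (state_ne_start (h.mono le_rfl hrt) hsr)
  · exact ⟨σ, rfl⟩
  · obtain ⟨σ, hσ⟩ := ht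
    obtain ⟨c, hc⟩ := exists_closing_of_le hrt (h.mono hsr.le le_rfl) ⟨c, hr⟩
    rw [hσ] at hc
    cases hc

theorem scan_pos_bit_eq {s k : ℕ} {σ : Scan} (hn : 0 < n) (hs : state n α β s = .start)
    (h : Unmarked α s (s + k + 1)) (hσ : state n α β (s + k + 1) = .scan σ) :
    σ.pos = k % n ∧ σ.bit = outputBit (β (s + k)) := by
  induction k generalizing σ with
  | zero =>
    rw [add_zero, state_succ_of_unmarked (h s le_rfl (by omega)), hs] at hσ
    cases hσ
    simp
  | succ k ih =>
    obtain ⟨τ, hτ⟩ := exists_scan_of_le h (r := s + k + 1) (by omega) (by omega) ⟨σ, hσ⟩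
    have hpos := (ih (h.mono le_rfl (by omega)) hτ).1
    rw [← add_assoc, state_succ_of_unmarked (h _ (by omega) (by omega)), hτ, RoundState.next,
      hpos] at hσ
    have hdiv := Nat.div_add_mod k n
    have hlt := Nat.mod_lt k hn
    split_ifs at hσ with hin
    · cases hσ
      refine ⟨?_, rfl⟩
      change k % n + 1 = (k + 1) % n
      rw [show k + 1 = k % n + 1 + n * (k / n) by omega, Nat.add_mul_mod_self_left,
        Nat.mod_eq_of_lt hin]
    · cases hσ
      refine ⟨?_, rfl⟩
      change 0 = (k + 1) % n
      rw [show k + 1 = n + n * (k / n) by omega, Nat.add_mul_mod_self_left, Nat.mod_self]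

end Run

/-! ### Comparing blocks with the announced number -/

/-- The bits of block `m` of the round starting at `s`. -/
def blockBits (n : ℕ) (α : ℕ → InputLetter) (s m i : ℕ) : Bool := inputBit (α (s + m * n + i))

/-- The number written in block `m` of the round starting at `s`. -/
def blockVal (n : ℕ) (α : ℕ → InputLetter) (s m : ℕ) : ℕ := prefixVal (blockBits n α s m) n

theorem blockVal_congr {n s m : ℕ} {α α' : ℕ → InputLetter}
    (h : ∀ r < s + (m + 1) * n, α r = α' r) : blockVal n α s m = blockVal n α' s m :=
  prefixVal_congr fun i hi => congrArg inputBit (h _ (by rw [Nat.succ_mul]; omega))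

/-- The comparison data after position `i` of block `m`, when Player O announces the number with
binary digits `b`. -/
def scanAt (n : ℕ) (α : ℕ → InputLetter) (s : ℕ) (b : ℕ → Bool) (m i : ℕ) : Scan where
  pending := decide (Pending (blockVal n α s) (prefixVal b n) m)
  eq := decide (prefixVal (blockBits n α s m) (i + 1) = prefixVal b (i + 1))
  le := decide (prefixVal (blockBits n α s m) (i + 1) ≤ prefixVal b (i + 1))
  bit := b i
  pos := i

/-- A round without a mark, from position `s` to `e`, in which Player O never deviates from
announcing the number with binary digits `b`. -/
structure ConsistentRound (n : ℕ) (α : ℕ → InputLetter) (β : ℕ → OutputLetter) (b : ℕ → Bool)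
    (s e : ℕ) : Prop where
  start : state n α β s = .start
  unmarked : Unmarked α s e
  bit_eq : ∀ t σ, s < t → t ≤ e → state n α β t = .scan σ → σ.bit = b σ.pos

section Scanning

variable {n : ℕ} {α : ℕ → InputLetter} {b : ℕ → Bool} {s m i : ℕ}

theorem next_scanAt_of_lt (x o : Bool) (hi : i + 1 < n) :
    (RoundState.scan (scanAt n α s b m i)).next n x o =
      readBit (scanAt n α s b m i).pending (scanAt n α s b m i).eq (scanAt n α s b m i).le
        (i + 1) x o :=
  if_pos hi

theorem next_scanAt_last (x o : Bool) (hi : i + 1 = n) :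
    (RoundState.scan (scanAt n α s b m i)).next n x o =
      if BadPairEndsAt (blockVal n α s) (prefixVal b n) m then .closing n
      else readBit (decide (Pending (blockVal n α s) (prefixVal b n) (m + 1))) true true 0 x o := by
  subst hi
  simp [RoundState.next, scanAt, badPairEndsAt_iff_pending, pending_succ_iff, blockVal]

variable {β : ℕ → OutputLetter} {e : ℕ}

theorem ConsistentRound.state_eq_scanAt_of_readBit (h : ConsistentRound n α β b s e)
    (he : s + m * n + i + 1 ≤ e)
    (hread : state n α β (s + m * n + i + 1) =
      readBit (decide (Pending (blockVal n α s) (prefixVal b n) m))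
        (decide (prefixVal (blockBits n α s m) i = prefixVal b i))
        (decide (prefixVal (blockBits n α s m) i ≤ prefixVal b i)) i
        (inputBit (α (s + m * n + i))) (outputBit (β (s + m * n + i)))) :
    state n α β (s + m * n + i + 1) = .scan (scanAt n α s b m i) := by
  have hbit : outputBit (β (s + m * n + i)) = b i := h.bit_eq _ _ (by omega) he hread
  rw [hread, readBit, hbit, scanAt, decide_prefixVal_eq_succ, decide_prefixVal_le_succ]
  rfl

theorem ConsistentRound.state_eq_scanAt_of_block_start (h : ConsistentRound n α β b s e)
    (hfirst : state n α β (s + m * n + 0 + 1) = .scan (scanAt n α s b m 0)) (hi : i < n)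
    (he : s + m * n + i + 1 ≤ e) :
    state n α β (s + m * n + i + 1) = .scan (scanAt n α s b m i) := by
  induction i with
  | zero => exact hfirst
  | succ i ih =>
    refine h.state_eq_scanAt_of_readBit he ?_
    rw [state_succ_of_unmarked (h.unmarked _ (by omega) (by omega)), ← add_assoc,
      ih (by omega) (by omega), next_scanAt_of_lt _ _ hi]
    rfl

theorem ConsistentRound.state_eq_scanAt (h : ConsistentRound n α β b s e)
    (hbad : ∀ q < m, ¬ BadPairEndsAt (blockVal n α s) (prefixVal b n) q) (hi : i < n)
    (he : s + m * n + i + 1 ≤ e) :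
    state n α β (s + m * n + i + 1) = .scan (scanAt n α s b m i) := by
  induction m generalizing i with
  | zero =>
    refine h.state_eq_scanAt_of_block_start
      (h.state_eq_scanAt_of_readBit (i := 0) (by omega) ?_) hi he
    rw [state_succ_of_unmarked (h.unmarked _ (by omega) (by omega))]
    simp [h.start, RoundState.next, prefixVal_zero, not_pending_zero]
  | succ m ih =>
    refine h.state_eq_scanAt_of_block_start
      (h.state_eq_scanAt_of_readBit (i := 0) (by omega) ?_) hi he
    have hlast : s + (m + 1) * n = s + m * n + (n - 1) + 1 := by rw [Nat.succ_mul]; omega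
    rw [state_succ_of_unmarked (h.unmarked _ (by omega) (by omega)), add_zero, hlast,
      ih (fun q hq => hbad q (hq.trans m.lt_succ_self)) (by omega) (by omega),
      next_scanAt_last _ _ (by omega), if_neg (hbad m m.lt_succ_self)]
    simp [prefixVal_zero]

theorem ConsistentRound.exists_badPairEndsAt_of_closing (h : ConsistentRound n α β b s e)
    (hn : 0 < n) {t c : ℕ} (hst : s ≤ t) (hte : t ≤ e) (hc : state n α β t = .closing c) :
    ∃ q, s + (q + 1) * n < t ∧ BadPairEndsAt (blockVal n α s) (prefixVal b n) q := by
  by_contra! hnone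
  have hne : s ≠ t := by
    rintro rfl
    simp [h.start] at hc
  obtain ⟨k, rfl⟩ := Nat.exists_eq_add_of_lt (lt_of_le_of_ne hst hne)
  have hk : s + k + 1 = s + k / n * n + k % n + 1 := by
    have := Nat.div_add_mod' k n
    omega
  have hscan := h.state_eq_scanAt (m := k / n) (fun q hq => hnone q ?_) (Nat.mod_lt k hn) (hk ▸ hte)
  · rw [← hk, hc] at hscan
    cases hscan
  · have : (q + 1) * n ≤ k / n * n := Nat.mul_le_mul_right n hq
    omega

theorem ConsistentRound.exists_closing_of_badPairEndsAt (h : ConsistentRound n α β b s e)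
    (hn : 0 < n) {q : ℕ} (hq : BadPairEndsAt (blockVal n α s) (prefixVal b n) q)
    (hqe : s + (q + 1) * n < e) : ∃ c, state n α β (s + (q + 1) * n + 1) = .closing c := by
  induction q using Nat.strong_induction_on with
  | _ q ih =>
    by_cases hfirst : ∃ q' < q, BadPairEndsAt (blockVal n α s) (prefixVal b n) q'
    · obtain ⟨q', hlt, hq'⟩ := hfirst
      have hle : (q' + 1) * n ≤ (q + 1) * n := Nat.mul_le_mul_right n (by omega)
      exact exists_closing_of_le (by omega) (h.unmarked.mono (by omega) hqe)
        (ih q' hlt hq' (by omega))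
    · push Not at hfirst
      have hlast : s + (q + 1) * n = s + q * n + (n - 1) + 1 := by rw [Nat.succ_mul]; omega
      refine ⟨n, ?_⟩
      rw [state_succ_of_unmarked (h.unmarked _ (by omega) hqe), hlast,
        h.state_eq_scanAt hfirst (by omega) (by omega), next_scanAt_last _ _ (by omega), if_pos hq]

theorem ConsistentRound.scan_time_le (h : ConsistentRound n α β b s e) (hn : 0 < n) {q : ℕ}
    (hq : BadPairEndsAt (blockVal n α s) (prefixVal b n) q) {σ : Scan}
    (hσ : state n α β e = .scan σ) : e ≤ s + (q + 1) * n := by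
  by_contra! hlt
  obtain ⟨c, hc⟩ := exists_closing_of_le hlt (h.unmarked.mono (by omega) le_rfl)
    (h.exists_closing_of_badPairEndsAt hn hq hlt)
  rw [hσ] at hc
  cases hc

end Scanning

/-! ### Costs of response -/

section Costs

variable {n : ℕ} {α : ℕ → InputLetter} {β : ℕ → OutputLetter}

/-- The cost for the pair `j` of the transitions of the automaton between `a` and `b`. -/
def cost (n : ℕ) (α : ℕ → InputLetter) (β : ℕ → OutputLetter) (j : Fin n × Bool) (a b : ℕ) : ℕ :=
  (badPairAutomaton n).segCost j .start (pairWord α β) a b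

/-- The cost of response of the automaton at position `t`. -/
def responseCost (n : ℕ) (α : ℕ → InputLetter) (β : ℕ → OutputLetter) (t : ℕ) : ℕ∞ :=
  (badPairAutomaton n).StCor .start (pairWord α β) t

theorem Cst_eq_true_iff {j : Fin n × Bool} {t : ℕ} :
    (badPairAutomaton n).Cst j (state n α β t) (pairWord α β t) = true ↔
      (∃ c, state n α β t = .closing (c + 1)) ∨
        ∃ σ : Scan, state n α β (t + 1) = .scan σ ∧ σ.pos = j.1 ∧ σ.bit ≠ j.2 :=
  decide_eq_true_iff

theorem cost_add_cost (j : Fin n × Bool) {a b c : ℕ} (hab : a ≤ b) (hbc : b ≤ c) :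
    cost n α β j a b + cost n α β j b c = cost n α β j a c :=
  StreettCost.segCost_add_segCost _ _ _ _ hab hbc

theorem cost_mono (j : Fin n × Bool) {a a' b b' : ℕ} (ha : a' ≤ a) (hb : b ≤ b') :
    cost n α β j a b ≤ cost n α β j a' b' :=
  Finset.card_le_card (Finset.filter_subset_filter _ (Finset.Ico_subset_Ico ha hb))

theorem cost_succ_eq_one {j : Fin n × Bool} {t : ℕ}
    (h : (badPairAutomaton n).Cst j (state n α β t) (pairWord α β t) = true) :
    cost n α β j t (t + 1) = 1 :=
  (StreettCost.segCost_succ _ _ _ _ _).trans (congrArg Bool.toNat h)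

theorem cost_succ_le_one (j : Fin n × Bool) (t : ℕ) : cost n α β j t (t + 1) ≤ 1 :=
  (StreettCost.segCost_succ _ _ _ _ _).trans_le (Bool.toNat_le _)

/-- The cost still to be paid, from a given state, before the end of a countdown. -/
def RoundState.remaining (n : ℕ) : RoundState → ℕ
  | .closing c => c
  | _ => n

theorem remaining_le_cost_succ_add (j : Fin n × Bool) {t : ℕ} (h : (α t).isRight = false) :
    (state n α β t).remaining n ≤
      cost n α β j t (t + 1) + (state n α β (t + 1)).remaining n := by
  rcases ht : state n α β t with _ | σ | _ | c
  · rw [state_succ_of_unmarked h, ht]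
    exact Nat.le_add_left _ _
  · rw [state_succ_of_unmarked h, ht]
    simp only [RoundState.next, readBit]
    split_ifs <;> exact Nat.le_add_left _ _
  · exact Nat.zero_le _
  · rw [state_succ_of_closing_succ h ht, cost_succ_eq_one (Cst_eq_true_iff.2 (Or.inl ⟨c, ht⟩)),
      add_comm]
    rfl

theorem remaining_le_cost_add (j : Fin n × Bool) {a b : ℕ} (hab : a ≤ b) (h : Unmarked α a b) :
    (state n α β a).remaining n ≤ cost n α β j a b + (state n α β b).remaining n := by
  induction b, hab using Nat.le_induction with
  | base => exact Nat.le_add_left _ _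
  | succ b hab ih =>
    have hstep := remaining_le_cost_succ_add (β := β) j (h b hab b.lt_succ_self)
    rw [← cost_add_cost j hab (Nat.le_add_right b 1)]
    have := ih (h.mono le_rfl b.le_succ)
    omega

theorem mem_res_iff {j : Fin n × Bool} {t : ℕ} :
    state n α β t ∈ (badPairAutomaton n).res j ↔
      state n α β t = .start ∨ state n α β t = .closing 0 := Iff.rfl

theorem not_mem_res_of_scan {j : Fin n × Bool} {t : ℕ} (h : ∃ σ, state n α β t = .scan σ) :
    state n α β t ∉ (badPairAutomaton n).res j := by
  obtain ⟨σ, hσ⟩ := h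
  intro hres
  rcases mem_res_iff.1 hres with h0 | h0 <;> rw [hσ] at h0 <;> cases h0

theorem exists_response_of_closing (j : Fin n × Bool) {t c : ℕ} (hc : state n α β t = .closing c) :
    ∃ t', t ≤ t' ∧ state n α β t' ∈ (badPairAutomaton n).res j ∧ cost n α β j t t' ≤ c := by
  induction c generalizing t with
  | zero => exact ⟨t, le_rfl, Or.inr hc, (StreettCost.segCost_self _ _ _ _ _).le⟩
  | succ c ih =>
    cases hmark : (α t).isRight
    · obtain ⟨t', htt', hres, hcost⟩ := ih (state_succ_of_closing_succ hmark hc)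
      refine ⟨t', t.le_succ.trans htt', hres, ?_⟩
      rw [← cost_add_cost j (Nat.le_add_right t 1) htt']
      have := cost_succ_le_one (α := α) (β := β) j t
      omega
    · exact ⟨t + 1, t.le_succ, Or.inl (state_succ_of_marked hmark),
        (cost_succ_le_one j t).trans (Nat.le_add_left 1 c)⟩

theorem exists_response_of_not_scan (hn : 0 < n) (j : Fin n × Bool) {u : ℕ}
    (hu : ∀ σ, state n α β u ≠ .scan σ) :
    ∃ t', u ≤ t' ∧ state n α β t' ∈ (badPairAutomaton n).res j ∧ cost n α β j u t' ≤ n := by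
  rcases hstate : state n α β u with _ | σ | c
  · exact ⟨u, le_rfl, Or.inl hstate, (StreettCost.segCost_self _ _ _ _ _).trans_le n.zero_le⟩
  · exact absurd hstate (hu σ)
  · obtain ⟨t', hut', hres, hcost⟩ := exists_response_of_closing j hstate
    exact ⟨t', hut', hres,
      hcost.trans (RoundState.closing_mem_reachable.1 (hstate ▸ state_mem_reachable hn u))⟩

theorem cost_eq_zero_of_scan {j : Fin n × Bool} {t u : ℕ}
    (hscan : ∀ r, t ≤ r → r < u → ∃ σ, state n α β r = .scan σ ∧ (σ.pos = j.1 → σ.bit = j.2))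
    (hu : ∀ σ, state n α β u ≠ .scan σ) : cost n α β j t u = 0 := by
  refine StreettCost.segCost_eq_zero _ _ _ _ fun r htr hru => eq_false_of_ne_true fun hcst => ?_
  rcases Cst_eq_true_iff.1 hcst with ⟨c, hc⟩ | ⟨σ, hσ, hpos, hbit⟩
  · obtain ⟨τ, hτ, -⟩ := hscan r htr hru
    exact RoundState.noConfusion (hτ.symm.trans hc)
  · rcases (Nat.succ_le_of_lt hru).eq_or_lt with rfl | hlt
    · exact hu σ hσ
    · obtain ⟨τ, hτ, hτbit⟩ := hscan (r + 1) (by omega) hlt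
      obtain rfl : σ = τ := RoundState.scan.inj (hσ.symm.trans hτ)
      exact hbit (hτbit hpos)

theorem responseCost_le (hn : 0 < n) {b : ℕ → Bool} {t u : ℕ} (htu : t ≤ u)
    (hscan : ∀ r, t ≤ r → r < u → ∃ σ, state n α β r = .scan σ ∧ σ.bit = b σ.pos)
    (hu : ∀ σ, state n α β u ≠ .scan σ) : responseCost n α β t ≤ n := by
  refine StreettCost.StCor_le _ _ _ _ _ fun j hreq => ?_
  rcases hreq with ⟨σ, hσ, hpos, hbit⟩ | hc
  · have hlt : t < u := lt_of_le_of_ne htu fun heq => hu σ (heq ▸ hσ)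
    have hj : b j.1 = j.2 := by
      obtain ⟨τ, hτ, hτbit⟩ := hscan t le_rfl hlt
      obtain rfl : σ = τ := RoundState.scan.inj (hσ.symm.trans hτ)
      rw [← hpos, ← hτbit, hbit]
    have hfree : cost n α β j t u = 0 :=
      cost_eq_zero_of_scan (fun r htr hru =>
        (hscan r htr hru).imp fun τ hτ => ⟨hτ.1, fun h => by rw [hτ.2, h, hj]⟩) hu
    obtain ⟨t', hut', hres, hcost⟩ := exists_response_of_not_scan hn j hu
    refine ⟨t', htu.trans hut', hres, ?_⟩
    change cost n α β j t t' ≤ n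
    rwa [← cost_add_cost j htu hut', hfree, zero_add]
  · exact exists_response_of_closing j hc

theorem le_responseCost_of_closing (hn : 0 < n) {t : ℕ} (h : ∀ r, t ≤ r → (α r).isRight = false)
    (hc : state n α β t = .closing n) : (n : ℕ∞) ≤ responseCost n α β t := by
  refine StreettCost.le_StCor _ _ _ _ _ (⟨0, hn⟩, false) (Or.inr hc) fun t' htt' hres => ?_
  have hrem := remaining_le_cost_add (β := β) (⟨0, hn⟩, false) htt' fun r hr _ => h r hr
  obtain ⟨c, hc'⟩ := exists_closing_of_le htt' (fun r hr _ => h r hr) ⟨n, hc⟩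
  obtain rfl : c = 0 := by
    rcases mem_res_iff.1 hres with h0 | h0 <;> rw [hc'] at h0 <;> cases h0
    rfl
  rw [hc, hc'] at hrem
  exact hrem

theorem le_responseCost_of_forall_scan (hn : 0 < n) {t : ℕ}
    (h : ∀ t', t ≤ t' → ∃ σ, state n α β t' = .scan σ) (c : ℕ) :
    (c : ℕ∞) ≤ responseCost n α β t := by
  obtain ⟨σ, hσ⟩ := h t le_rfl
  have hpos : σ.pos < n := RoundState.scan_mem_reachable.1 (hσ ▸ state_mem_reachable hn t)
  exact StreettCost.le_StCor _ _ _ _ _ (⟨σ.pos, hpos⟩, σ.bit) (Or.inl ⟨σ, hσ, rfl, rfl⟩)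
    fun t' htt' hres => absurd hres (not_mem_res_of_scan (h t' htt'))

theorem lt_cost_of_mismatch {j : Fin n × Bool} {t u : ℕ} {σ : Scan}
    (hσ : state n α β (t + 1) = .scan σ) (hpos : σ.pos = j.1) (hbit : σ.bit ≠ j.2)
    (htu : t + 1 ≤ u) (h : Unmarked α (t + 1) u) (hu : state n α β u = .closing 0) :
    n < cost n α β j t u := by
  have hcount := remaining_le_cost_add (β := β) j htu h
  rw [hσ, hu] at hcount
  rw [← cost_add_cost j (Nat.le_add_right t 1) htu,
    cost_succ_eq_one (Cst_eq_true_iff.2 (Or.inr ⟨σ, hσ, hpos, hbit⟩)), add_comm]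
  exact Nat.lt_succ_of_le hcount

theorem succ_le_responseCost_of_mismatch (hn : 0 < n) {s t e : ℕ} {σ : Scan}
    (hs : state n α β s = .start) (h : Unmarked α s e) (he : state n α β e = .closing 0)
    (hst : s < t) (hte : t ≤ e) (hσ : state n α β t = .scan σ)
    (hbit : σ.bit ≠ outputBit (β (s + σ.pos))) :
    ((n + 1 : ℕ) : ℕ∞) ≤ responseCost n α β (s + σ.pos + 1) := by
  obtain ⟨k, rfl⟩ := Nat.exists_eq_add_of_lt hst
  have hunmarked : Unmarked α s (s + k + 1) := h.mono le_rfl hte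
  obtain ⟨hpos, hval⟩ := scan_pos_bit_eq hn hs hunmarked hσ
  have hlt : σ.pos < n := hpos ▸ Nat.mod_lt k hn
  have hle : σ.pos ≤ k := hpos ▸ Nat.mod_le k n
  have hne : σ.pos ≠ k := fun heq => hbit (heq ▸ hval)
  let j : Fin n × Bool := (⟨σ.pos, hlt⟩, outputBit (β (s + σ.pos)))
  obtain ⟨τ, hτ⟩ := exists_scan_of_le (r := s + σ.pos + 1) hunmarked (by omega) (by omega) ⟨σ, hσ⟩
  obtain ⟨hτpos, hτbit⟩ := scan_pos_bit_eq hn hs (hunmarked.mono le_rfl (by omega)) hτ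
  rw [Nat.mod_eq_of_lt hlt] at hτpos
  refine StreettCost.le_StCor _ _ _ _ _ j (Or.inl ⟨τ, hτ, hτpos, hτbit⟩) fun t' htt' hres => ?_
  have ht' : s + k + 1 ≤ t' := by
    by_contra! hlt
    exact not_mem_res_of_scan (exists_scan_of_le hunmarked (by omega) hlt.le ⟨σ, hσ⟩) hres
  have hmin : state n α β (min t' e) = .closing 0 := by
    rcases le_total t' e with hle' | hle'
    · rw [min_eq_left hle']
      exact (mem_res_iff.1 hres).resolve_left (state_ne_start (h.mono le_rfl hle') (by omega))
    · rwa [min_eq_right hle']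
  calc n + 1
      ≤ cost n α β j (s + k) (min t' e) :=
        lt_cost_of_mismatch hσ rfl hbit (le_min ht' hte) (h.mono (by omega) (min_le_right _ _)) hmin
    _ ≤ cost n α β j (s + σ.pos + 1) t' :=
        cost_mono j (by omega) (min_le_left t' e)

end Costs

/-! ### Player O's strategy -/

/-- The position after the last mark `#` among the first `t` input letters, `0` if there is none:
the start of the round that contains position `t`. -/
def roundStart (α : ℕ → InputLetter) : ℕ → ℕ
  | 0 => 0
  | t + 1 => if (α t).isRight = true then t + 1 else roundStart α t

section RoundStart

variable {α : ℕ → InputLetter}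

theorem roundStart_le (t : ℕ) : roundStart α t ≤ t := by
  induction t with
  | zero => exact le_rfl
  | succ t ih =>
    unfold roundStart
    split_ifs
    · exact le_rfl
    · exact ih.trans t.le_succ

theorem roundStart_succ_of_marked {t : ℕ} (h : (α t).isRight = true) :
    roundStart α (t + 1) = t + 1 := if_pos h

theorem roundStart_succ_of_unmarked {t : ℕ} (h : (α t).isRight = false) :
    roundStart α (t + 1) = roundStart α t := if_neg (ne_true_of_eq_false h)

theorem unmarked_roundStart (t : ℕ) : Unmarked α (roundStart α t) t := by
  induction t with
  | zero => exact fun r _ hr => absurd hr r.not_lt_zero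
  | succ t ih =>
    cases h : (α t).isRight
    · rw [roundStart_succ_of_unmarked h]
      intro r hle hr
      rcases (Nat.lt_succ_iff.1 hr).eq_or_lt with rfl | hrt
      · exact h
      · exact ih r hle hrt
    · rw [roundStart_succ_of_marked h]
      exact fun r hle hr => absurd hle hr.not_ge

theorem roundStart_eq_of_unmarked {r t : ℕ} (hrt : r ≤ t) (h : Unmarked α r t) :
    roundStart α t = roundStart α r := by
  induction t, hrt using Nat.le_induction with
  | base => rfl
  | succ t hrt ih =>
    rw [roundStart_succ_of_unmarked (h t hrt t.lt_succ_self), ih (h.mono le_rfl t.le_succ)]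

theorem roundStart_eq_of_mem_round {r t : ℕ} (hr : roundStart α t ≤ r) (hrt : r ≤ t) :
    roundStart α r = roundStart α t :=
  (roundStart_eq_of_unmarked hrt ((unmarked_roundStart t).mono hr le_rfl)).symm

theorem roundStart_congr {α' : ℕ → InputLetter} {t : ℕ} (h : ∀ r < t, α r = α' r) :
    roundStart α t = roundStart α' t := by
  induction t with
  | zero => rfl
  | succ t ih =>
    rw [roundStart, roundStart, h t t.lt_succ_self, ih fun r hr => h r (hr.trans t.lt_succ_self)]

theorem state_roundStart (n : ℕ) (β : ℕ → OutputLetter) (t : ℕ) :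
    state n α β (roundStart α t) = .start := by
  induction t with
  | zero => rfl
  | succ t ih =>
    unfold roundStart
    split_ifs with h
    · exact state_succ_of_marked h
    · exact ih

theorem lt_roundStart_of_marked {s t : ℕ} (h : (α s).isRight = true) (hst : s < t) :
    s < roundStart α t := by
  by_contra! hle
  rw [unmarked_roundStart t s hle hst] at h
  cases h

end RoundStart

/-- The number Player O announces in the round that contains position `t`: the least value of a bad
pair in the first `2 ^ 2 ^ n` blocks of that round. -/
def announced (n : ℕ) (α : ℕ → InputLetter) (t : ℕ) : ℕ :=
  badValue (2 ^ 2 ^ n) (blockVal n α (roundStart α t))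

/-- Player O's winning response: in every block of a round she spells the announced number. -/
def honest (n : ℕ) (α : ℕ → InputLetter) (t : ℕ) : OutputLetter :=
  .inl ((announced n α t).testBit ((t - roundStart α t) % n))

theorem hasLookahead_honest (n : ℕ) : HasLookahead (n * 2 ^ 2 ^ n) (honest n) := by
  intro α α' t h
  have hstart : roundStart α t = roundStart α' t := roundStart_congr fun r hr => h r (by omega)
  have hannounced : announced n α t = announced n α' t := by
    rw [announced, announced, ← hstart]
    refine badValue_congr fun m hm => blockVal_congr fun r hr => h r ?_
    have : (m + 1) * n ≤ n * 2 ^ 2 ^ n := by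
      rw [mul_comm]
      exact Nat.mul_le_mul_left n hm
    have := roundStart_le (α := α) t
    omega
  rw [honest, honest, hannounced, hstart]

theorem exists_badPairEndsAt_announced (n : ℕ) (α : ℕ → InputLetter) (t : ℕ) :
    ∃ q < 2 ^ 2 ^ n, BadPairEndsAt (blockVal n α (roundStart α t)) (announced n α t) q :=
  exists_badPairEndsAt_badValue fun _ => prefixVal_lt _ _

theorem announced_lt (n : ℕ) (α : ℕ → InputLetter) (t : ℕ) : announced n α t < 2 ^ n := by
  obtain ⟨q, -, hq, -⟩ := exists_badPairEndsAt_announced n α t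
  exact hq ▸ prefixVal_lt _ _

section Honest

variable {n : ℕ} {α : ℕ → InputLetter}

theorem roundStart_lt_of_scan {β : ℕ → OutputLetter} {t : ℕ} {σ : Scan}
    (hσ : state n α β t = .scan σ) : roundStart α t < t := by
  refine lt_of_le_of_ne (roundStart_le t) fun heq => ?_
  have := state_roundStart (α := α) n β t
  rw [heq, hσ] at this
  cases this

theorem scan_bit_honest (hn : 0 < n) {t : ℕ} {σ : Scan} (hσ : state n α (honest n α) t = .scan σ) :
    σ.bit = (announced n α t).testBit σ.pos := by
  obtain ⟨k, hk⟩ := Nat.exists_eq_add_of_lt (roundStart_lt_of_scan hσ)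
  have hround : roundStart α (roundStart α t + k) = roundStart α t :=
    roundStart_eq_of_mem_round (Nat.le_add_right _ _) (by omega)
  rw [hk] at hσ
  obtain ⟨hpos, hbit⟩ := scan_pos_bit_eq hn (state_roundStart n _ t)
    ((unmarked_roundStart t).mono le_rfl hk.ge) hσ
  rw [hbit, hpos, honest, announced, hround, Nat.add_sub_cancel_left]
  rfl

theorem consistentRound_honest (hn : 0 < n) (t : ℕ) :
    ConsistentRound n α (honest n α) (announced n α t).testBit (roundStart α t) t where
  start := state_roundStart n _ t
  unmarked := unmarked_roundStart t
  bit_eq r σ hr hrt hσ := by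
    rw [scan_bit_honest hn hσ, announced, roundStart_eq_of_mem_round hr.le hrt, announced]

theorem scan_time_honest_le (hn : 0 < n) {t : ℕ} {σ : Scan}
    (hσ : state n α (honest n α) t = .scan σ) : t ≤ roundStart α t + n * 2 ^ 2 ^ n := by
  obtain ⟨q, hq, hbad⟩ := exists_badPairEndsAt_announced n α t
  rw [← prefixVal_testBit (announced_lt n α t)] at hbad
  have hle := (consistentRound_honest hn t).scan_time_le hn hbad hσ
  have : (q + 1) * n ≤ n * 2 ^ 2 ^ n := by
    rw [mul_comm]
    exact Nat.mul_le_mul_left n hq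
  omega

theorem roundStart_eq_of_scan {β : ℕ → OutputLetter} {t u : ℕ} (htu : t ≤ u)
    (h : ∀ r, t ≤ r → r ≤ u → ∃ σ, state n α β r = .scan σ) :
    roundStart α u = roundStart α t := by
  refine roundStart_eq_of_unmarked htu fun r htr hru => ?_
  obtain ⟨σ, hσ⟩ := h (r + 1) (by omega) hru
  exact unmarked_of_state_succ_eq_scan hσ

theorem exists_not_scan_honest (hn : 0 < n) (t : ℕ) :
    ∃ u, t ≤ u ∧ ∀ σ, state n α (honest n α) u ≠ .scan σ := by
  by_contra! hscan
  let u := t + n * 2 ^ 2 ^ n + 1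
  obtain ⟨σ, hσ⟩ := hscan u (by omega)
  have hround : roundStart α u = roundStart α t :=
    roundStart_eq_of_scan (by omega) fun r hr _ => hscan r hr
  have := scan_time_honest_le hn hσ
  have := roundStart_le (α := α) t
  omega

theorem responseCost_honest_le (hn : 0 < n) (t : ℕ) : responseCost n α (honest n α) t ≤ n := by
  have hend := exists_not_scan_honest (α := α) hn t
  obtain ⟨htu, hu⟩ := Nat.find_spec hend
  have hscan : ∀ r, t ≤ r → r < Nat.find hend → ∃ σ, state n α (honest n α) r = .scan σ :=
    fun r htr hr => by simpa [htr] using Nat.find_min hend hr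
  refine responseCost_le hn (b := (announced n α t).testBit) htu (fun r htr hr => ?_) hu
  obtain ⟨σ, hσ⟩ := hscan r htr hr
  refine ⟨σ, hσ, ?_⟩
  have hround := roundStart_eq_of_scan htr fun r' hr' hle => hscan r' hr' (hle.trans_lt hr)
  rw [scan_bit_honest hn hσ, announced, hround, announced]

theorem exists_le_responseCost_honest (hn : 0 < n) (hα : ∀ t, (α t).isRight = false) (T : ℕ) :
    ∃ t, T ≤ t ∧ (n : ℕ∞) ≤ responseCost n α (honest n α) t := by
  obtain ⟨u, hTu, hu⟩ := exists_not_scan_honest (α := α) hn (T + 1)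
  rcases hstate : state n α (honest n α) u with _ | σ | c
  · exact absurd hstate (state_ne_start (s := 0) (fun r _ _ => hα r) (by omega))
  · exact absurd hstate (hu σ)
  · have hzero := state_eq_closing_zero (fun r _ _ => hα r) hstate
    exact ⟨u + c + 1, by omega, le_responseCost_of_closing hn (fun r _ => hα r)
      (state_succ_of_closing_zero (hα _) hzero)⟩

end Honest

theorem exists_strategy_of_cost_eq {n : ℕ} (hn : 0 < n) :
    ∃ f : ℕ → ℕ, DelayFn f ∧ ∃ τO, OWinning f (badPairAutomaton n).Lang τO ∧
      stratCost (badPairAutomaton n).wCost f τO = n := by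
  have hK : n * 2 ^ 2 ^ n - 1 + 1 = n * 2 ^ 2 ^ n :=
    Nat.sub_add_cancel (Nat.mul_pos hn (by positivity))
  have hf := delayFn_constDF (n * 2 ^ 2 ^ n - 1)
  obtain ⟨τO, hτO⟩ := HasLookahead.exists_response_eq (hK ▸ hasLookahead_honest n)
  have hle : ∀ α, (badPairAutomaton n).wCost (pairWord α (honest n α)) ≤ n := fun α =>
    StreettCost.wCost_le _ (responseCost_honest_le hn)
  refine ⟨_, hf, τO, ?_, ?_⟩
  · rw [OWinning_iff_response hf, hτO]
    exact fun α => (hle α).trans_lt (ENat.natCast_lt_top n)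
  · rw [stratCost_eq_iSup_response hf, hτO]
    refine le_antisymm (iSup_le hle) (le_iSup_of_le (fun _ => .inl false) ?_)
    exact StreettCost.le_wCost _ (exists_le_responseCost_honest hn fun _ => rfl)

/-! ### Player I's strategy -/

/-- Player I plays the round that starts at `s` against an announcement with first bit `o`: he
spells the initial segment of length `2 ^ 2 ^ n - 1` of the ruler sequence, and then repeats the
bit `!o`. -/
def SpellsRuler (n : ℕ) (α : ℕ → InputLetter) (o : Bool) (s e : ℕ) : Prop :=
  ∀ k, s + k < e → inputBit (α (s + k)) =
    if k < n * (2 ^ 2 ^ n - 1) then (ruler (k / n)).testBit (k % n) else !o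

section SpellsRuler

variable {n : ℕ} {α : ℕ → InputLetter} {o : Bool} {s e : ℕ}

theorem SpellsRuler.blockVal_eq (h : SpellsRuler n α o s e) {m : ℕ} (hm : m < 2 ^ 2 ^ n - 1)
    (hme : s + (m + 1) * n ≤ e) : blockVal n α s m = ruler m := by
  refine (prefixVal_congr fun i hi => ?_).trans (prefixVal_testBit (ruler_lt hm))
  rw [Nat.succ_mul] at hme
  have hlt : m * n + i < n * (2 ^ 2 ^ n - 1) :=
    calc m * n + i < (m + 1) * n := by rw [Nat.succ_mul]; omega
      _ ≤ n * (2 ^ 2 ^ n - 1) := by rw [mul_comm]; exact Nat.mul_le_mul_left n hm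
  have hbit := h (m * n + i) (by omega)
  rwa [if_pos hlt, mul_comm, Nat.mul_add_div (by omega), Nat.mul_add_mod, Nat.mod_eq_of_lt hi,
    Nat.div_eq_of_lt hi, add_zero, mul_comm, ← add_assoc] at hbit

theorem SpellsRuler.not_badPairEndsAt (h : SpellsRuler n α o s e) (hn : 0 < n) {b : ℕ → Bool}
    (hb : b 0 = o) {q : ℕ} (hq : s + (q + 1) * n ≤ e) :
    ¬ BadPairEndsAt (blockVal n α s) (prefixVal b n) q := by
  rintro ⟨hval, p, hpq⟩
  rcases lt_or_ge q (2 ^ 2 ^ n - 1) with hlt | hge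
  · refine not_isBadPair_ruler p q (hpq.congr fun r _ hr => ?_)
    have : (r + 1) * n ≤ (q + 1) * n := Nat.mul_le_mul_right n (by omega)
    exact h.blockVal_eq (hr.trans_lt hlt) (by omega)
  · have hN : n * (2 ^ 2 ^ n - 1) ≤ q * n := mul_comm q n ▸ Nat.mul_le_mul_left n hge
    rw [Nat.succ_mul] at hq
    have hfirst := h (q * n) (by omega)
    rw [if_neg hN.not_gt] at hfirst
    have hbits : blockBits n α s q 0 = b 0 := by
      rw [← testBit_prefixVal (blockBits n α s q) hn, ← testBit_prefixVal b hn]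
      exact congrArg (Nat.testBit · 0) hval
    rw [hb] at hbits
    exact Bool.not_ne_self o (hfirst.symm.trans hbits)

theorem SpellsRuler.exists_mismatch {β : ℕ → OutputLetter}
    (h : SpellsRuler n α (outputBit (β s)) s e) (hn : 0 < n) (hs : state n α β s = .start)
    (hunmarked : Unmarked α s e) (hse : s ≤ e) {c : ℕ} (he : state n α β e = .closing c) :
    ∃ t σ, s < t ∧ t ≤ e ∧ state n α β t = .scan σ ∧ σ.bit ≠ outputBit (β (s + σ.pos)) := by
  by_contra! hconsistent
  have hround : ConsistentRound n α β (fun i => outputBit (β (s + i))) s e :=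
    ⟨hs, hunmarked, hconsistent⟩
  obtain ⟨q, hq, hbad⟩ := hround.exists_badPairEndsAt_of_closing hn hse le_rfl he
  exact h.not_badPairEndsAt hn rfl hq.le hbad

end SpellsRuler

/-- Player I's letter at position `l`, given the letters `α` before `l`, against the response `g`.
He ends a round only if the automaton completed a countdown `n * (2 ^ 2 ^ n - 1)` positions earlier:
the letters before `l` determine the response up to there. -/
def spoilerLetter (n : ℕ) (g : (ℕ → InputLetter) → ℕ → OutputLetter) (l : ℕ)
    (α : ℕ → InputLetter) : InputLetter :=
  if l - roundStart α l < n * (2 ^ 2 ^ n - 1) then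
    .inl ((ruler ((l - roundStart α l) / n)).testBit ((l - roundStart α l) % n))
  else if state n α (g α) (l - n * (2 ^ 2 ^ n - 1)) = .closing 0 then .inr true
  else .inl !outputBit (g α (roundStart α l))

theorem spoilerLetter_congr {n : ℕ} {g : (ℕ → InputLetter) → ℕ → OutputLetter}
    (hg : HasLookahead (n * (2 ^ 2 ^ n - 1)) g) {l : ℕ} {α α' : ℕ → InputLetter}
    (h : ∀ r < l, α r = α' r) : spoilerLetter n g l α = spoilerLetter n g l α' := by
  have hstart : roundStart α l = roundStart α' l := roundStart_congr h
  rw [spoilerLetter, spoilerLetter, ← hstart]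
  by_cases hlt : l - roundStart α l < n * (2 ^ 2 ^ n - 1)
  · rw [if_pos hlt, if_pos hlt]
  have := roundStart_le (α := α) l
  have hresp : ∀ r, r + n * (2 ^ 2 ^ n - 1) ≤ l → g α r = g α' r :=
    fun r hr => hg fun m hm => h m (hm.trans_le hr)
  have hstate : state n α (g α) (l - n * (2 ^ 2 ^ n - 1)) =
      state n α' (g α') (l - n * (2 ^ 2 ^ n - 1)) :=
    StreettCost.stateAt_congr _ _ fun r hr =>
      Prod.ext (h r (by omega)) (hresp r (by omega))
  rw [if_neg hlt, if_neg hlt, hstate, hresp _ (by omega)]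

section Spoiler

variable {n : ℕ} {g : (ℕ → InputLetter) → ℕ → OutputLetter} {α : ℕ → InputLetter}

theorem isRight_spoilerLetter_iff {l : ℕ} :
    (spoilerLetter n g l α).isRight = true ↔ n * (2 ^ 2 ^ n - 1) ≤ l - roundStart α l ∧
      state n α (g α) (l - n * (2 ^ 2 ^ n - 1)) = .closing 0 := by
  unfold spoilerLetter
  split_ifs with hlt hstate
  · exact iff_of_false Bool.false_ne_true fun h => h.1.not_gt hlt
  · exact iff_of_true rfl ⟨not_lt.1 hlt, hstate⟩
  · exact iff_of_false Bool.false_ne_true fun h => hstate h.2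

theorem spellsRuler_spoiler (hα : ∀ l, α l = spoilerLetter n g l α) (t : ℕ) :
    SpellsRuler n α (outputBit (g α (roundStart α t))) (roundStart α t) t := by
  intro k hk
  have hround : roundStart α (roundStart α t + k) = roundStart α t :=
    roundStart_eq_of_mem_round (Nat.le_add_right _ _) hk.le
  have hmark := unmarked_roundStart t _ (Nat.le_add_right _ k) hk
  rw [hα, spoilerLetter, hround, Nat.add_sub_cancel_left] at hmark ⊢
  split_ifs at hmark ⊢ with hlt hstate
  · rfl
  · cases hmark
  · rfl

theorem exists_succ_le_responseCost_of_marked (hn : 0 < n) (hα : ∀ l, α l = spoilerLetter n g l α)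
    {l : ℕ} (hl : (α l).isRight = true) :
    ∃ t, roundStart α l ≤ t ∧ ((n + 1 : ℕ) : ℕ∞) ≤ responseCost n α (g α) t := by
  obtain ⟨hle, hclosing⟩ := isRight_spoilerLetter_iff.1 (hα l ▸ hl)
  have := roundStart_le (α := α) l
  have hround : roundStart α (l - n * (2 ^ 2 ^ n - 1)) = roundStart α l :=
    roundStart_eq_of_mem_round (by omega) (Nat.sub_le _ _)
  have hstart := state_roundStart (α := α) n (g α) l
  have hunmarked : Unmarked α (roundStart α l) (l - n * (2 ^ 2 ^ n - 1)) :=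
    (unmarked_roundStart l).mono le_rfl (Nat.sub_le _ _)
  have hspells := hround ▸ spellsRuler_spoiler hα (l - n * (2 ^ 2 ^ n - 1))
  obtain ⟨t, σ, hst, hte, hσ, hbit⟩ :=
    hspells.exists_mismatch hn hstart hunmarked (by omega) hclosing
  exact ⟨_, by omega, succ_le_responseCost_of_mismatch hn hstart hunmarked hclosing hst hte hσ hbit⟩

theorem exists_scan_of_unmarked (hα : ∀ l, α l = spoilerLetter n g l α) {T t : ℕ}
    (hT : ∀ r, T ≤ r → (α r).isRight = false) (ht : roundStart α T < t) :
    ∃ σ, state n α (g α) t = .scan σ := by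
  have hunmarked : ∀ u, Unmarked α (roundStart α T) u := fun u r hr _ => by
    rcases lt_or_ge r T with hrT | hTr
    · exact unmarked_roundStart T r hr hrT
    · exact hT r hTr
  have hne : ∀ u, roundStart α T ≤ u → state n α (g α) u ≠ .closing 0 := by
    intro u hu hclosing
    have hmark := (isRight_spoilerLetter_iff (n := n) (g := g) (α := α)
      (l := u + n * (2 ^ 2 ^ n - 1))).2 ⟨?_, by rwa [Nat.add_sub_cancel]⟩
    · rw [← hα, hunmarked _ _ (by omega) (Nat.lt_succ_self _)] at hmark
      cases hmark
    · rw [roundStart_eq_of_unmarked (r := roundStart α T) (by omega) (hunmarked _),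
        roundStart_eq_of_mem_round le_rfl (roundStart_le T)]
      omega
  rcases hstate : state n α (g α) t with _ | σ | c
  · exact absurd hstate (state_ne_start (hunmarked t) ht)
  · exact ⟨σ, rfl⟩
  · exact absurd (state_eq_closing_zero ((hunmarked _).mono ht.le le_rfl) hstate)
      (hne (t + c) (by omega))

theorem exists_succ_le_responseCost (hn : 0 < n) (hα : ∀ l, α l = spoilerLetter n g l α) (T : ℕ) :
    ∃ t, T ≤ t ∧ ((n + 1 : ℕ) : ℕ∞) ≤ responseCost n α (g α) t := by
  by_cases hmarks : ∀ s, ∃ l, s ≤ l ∧ (α l).isRight = true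
  · obtain ⟨s, hTs, hs⟩ := hmarks T
    obtain ⟨l, hsl, hl⟩ := hmarks (s + 1)
    have hlt : s < roundStart α l := lt_roundStart_of_marked hs hsl
    obtain ⟨t, ht, hcost⟩ := exists_succ_le_responseCost_of_marked hn hα hl
    exact ⟨t, by omega, hcost⟩
  · push Not at hmarks
    obtain ⟨s, hs⟩ := hmarks
    have hscan : ∀ t, roundStart α s < t → ∃ σ, state n α (g α) t = .scan σ :=
      fun t => exists_scan_of_unmarked hα fun r hr => by simpa using hs r hr
    exact ⟨T + roundStart α s + 1, by omega,
      le_responseCost_of_forall_scan hn (fun t ht => hscan t (by omega)) _⟩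

end Spoiler

theorem exists_lt_wCost_of_hasLookahead {n : ℕ} (hn : 0 < n)
    {g : (ℕ → InputLetter) → ℕ → OutputLetter} (hg : HasLookahead (n * (2 ^ 2 ^ n - 1)) g) :
    ∃ α, (n : ℕ∞) < (badPairAutomaton n).wCost (pairWord α (g α)) := by
  obtain ⟨α, hα⟩ := exists_causal_fixedPoint (spoilerLetter n g) fun l α α' =>
    spoilerLetter_congr hg
  refine ⟨α, lt_of_lt_of_le ?_ (StreettCost.le_wCost _ (exists_succ_le_responseCost hn hα))⟩
  exact_mod_cast n.lt_succ_self

theorem exists_lookahead_le_of_stratCost_le {n : ℕ} (hn : 0 < n) {f : ℕ → ℕ} (hf : DelayFn f)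
    {τO : List InputLetter → OutputLetter}
    (hcost : stratCost (badPairAutomaton n).wCost f τO ≤ n) :
    ∃ i : ℕ, n * (2 ^ 2 ^ n - 1) ≤ ∑ i' ∈ Finset.range (i + 1), (f i' - 1) := by
  by_contra! hsmall
  obtain ⟨α, hα⟩ := exists_lt_wCost_of_hasLookahead hn
    (hasLookahead_response (fun t => sum_range_le_of_sum_sub_one_lt hf (hsmall t)) τO)
  rw [stratCost_eq_iSup_response hf] at hcost
  exact (le_iSup_of_le α le_rfl).trans hcost |>.not_gt hα

end BadPairGame

/-- Theorem 9, doubly-exponential lookahead for optimal Streett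
strategies. There is a polynomial-size family of Streett automata with costs `A_n` over
`({0,1} ∪ {0,1}×{#}) × ({0,1} ∪ {0,1}×{◄,►})` such that Player O has a winning strategy
of cost `n` for some delay function, but every delay function admitting a winning strategy
of cost `n` eventually grants a lookahead of size `n·(2^(2^n) - 1)`. -/
theorem statement15 :
    ∃ p : Polynomial ℕ, ∀ n : ℕ, 0 < n →
      ∃ m kJ : ℕ,
        ∃ M : StreettCost (Fin m) ((Bool ⊕ Bool) × (Bool ⊕ (Bool × Bool))) (Fin kJ),
          m + kJ ≤ p.eval n ∧
          (∃ f : ℕ → ℕ, DelayFn f ∧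
            ∃ τO, OWinning f M.Lang τO ∧ stratCost M.wCost f τO = (n : ℕ∞)) ∧
          (∀ f : ℕ → ℕ, DelayFn f →
            (∃ τO, OWinning f M.Lang τO ∧ stratCost M.wCost f τO = (n : ℕ∞)) →
            ∃ i : ℕ, n * (2 ^ 2 ^ n - 1) ≤ ∑ i' ∈ Finset.range (i + 1), (f i' - 1)) := by
  refine ⟨Polynomial.C 19 * Polynomial.X + Polynomial.C 2, fun n hn => ?_⟩
  obtain ⟨m, kJ, M, hsize, hwCost⟩ := BadPairGame.exists_fin_badPairAutomaton hn
  have hLang : M.Lang = (BadPairGame.badPairAutomaton n).Lang := by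
    rw [StreettCost.Lang_eq, StreettCost.Lang_eq, hwCost]
  refine ⟨m, kJ, M, by simpa using hsize, ?_, ?_⟩
  · rw [hLang, hwCost]
    exact BadPairGame.exists_strategy_of_cost_eq hn
  · rintro f hf ⟨τO, -, hcost⟩
    exact BadPairGame.exists_lookahead_le_of_stratCost_le hn hf (hwCost ▸ hcost.le)
end
end

section
/- Let A be a parity automaton with costs over Σ_I × Σ_O. If Player O wins the delay-free game Γ_{f_0}(L(A)), then she has a winning strategy τ_O for Γ_{f_0}(L(A)) with Cst_A(τ_O) ≤ 2·|A|, where |A| is the number of states of A. -/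
attribute [local instance] Classical.propDecidable

noncomputable section

/-- A parity automaton with costs `(Q, A, qI, δ, Ω, Cst)`.
`Cst q a = true` means that the transition `(q, a, δ q a)` is an increment-transition,
`Cst q a = false` means it is an `ε`-transition. -/
structure PACost (Q : Type) (A : Type) where
  qI : Q
  δ : Q → A → Q
  Ω : Q → ℕ
  Cst : Q → A → Bool

namespace PACost

variable {Q A : Type}

/-- The state reached after processing the first `n` letters of `w` starting in `q0`. -/
def stateAt (M : PACost Q A) (q0 : Q) (w : ℕ → A) : ℕ → Q
  | 0 => q0
  | n + 1 => M.δ (stateAt M q0 w n) (w n)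

/-- The cost (number of increment-transitions) of the run infix between positions `m` and `n`. -/
def segCost (M : PACost Q A) (q0 : Q) (w : ℕ → A) (m n : ℕ) : ℕ :=
  ((Finset.Ico m n).filter fun j => M.Cst (stateAt M q0 w j) (w j) = true).card

/-- `Ans c`: the set of even colors of `M` that are larger than `c`. -/
def Ans (M : PACost Q A) (c : ℕ) : Set ℕ :=
  { c' | (∃ q, M.Ω q = c') ∧ c < c' ∧ Even c' }

/-- The cost-of-response at position `n` of the run of `M` on `w` starting in `q0`. -/
def Cor (M : PACost Q A) (q0 : Q) (w : ℕ → A) (n : ℕ) : ℕ∞ :=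
  if Even (M.Ω (stateAt M q0 w n)) then 0
  else
    sInf { c : ℕ∞ | ∃ n', n < n' ∧
      M.Ω (stateAt M q0 w n') ∈ M.Ans (M.Ω (stateAt M q0 w n)) ∧
      c = (segCost M q0 w n n' : ℕ∞) }

/-- The run of `M` on `w` starting in `q0` satisfies the parity condition with costs. -/
def Accepting (M : PACost Q A) (q0 : Q) (w : ℕ → A) : Prop :=
  Filter.limsup (fun n => Cor M q0 w n) Filter.atTop < ⊤

/-- The language of `M`. -/
def Lang (M : PACost Q A) : Set (ℕ → A) := { w | Accepting M M.qI w }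

/-- `M` is a finitary Büchi automaton: every transition is an increment-transition and
all colors are `1` or `2`. -/
def FinBuchi (M : PACost Q A) : Prop :=
  (∀ q a, M.Cst q a = true) ∧ ∀ q, M.Ω q = 1 ∨ M.Ω q = 2

end PACost

/-- The finite segment `w m, w (m+1), …, w (n-1)` of an infinite word `w`. -/
def seg {A : Type} (w : ℕ → A) (m n : ℕ) : List A :=
  (List.range (n - m)).map fun i => w (m + i)

/-- The cost `limsup_n Cor(ρ(w), n)` of the run of `M` on an infinite word `w`. -/
def PACost.wCost {Q I O : Type} (M : PACost Q (I × O)) : (ℕ → I × O) → ℕ∞ :=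
  fun w => Filter.limsup (fun n => PACost.Cor M M.qI w n) Filter.atTop

/-!
Suppose Player O answers almost all requests with bounded cost in every play, where the bound may
depend on the play. By the Baire category theorem, after some finite play the bound is uniform from
a fixed position on. Then in every continuation a request that is never answered causes only
finitely many increments, and eventually all colours are smaller than it. This property is a parity
condition: the priority of a transition is its colour or, if it is an increment, the maximum of its
colour and the largest open request.

Progress measures for this condition live on the tree of histories. For each state choose, among the
histories leading to it, one with the largest open request and then with the least measure, and
answer in this state as after the chosen history. This positional strategy has the same property.
Under a positional strategy, an increment on a loop between a request and its first answer can be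
repeated forever, so the increments occur in distinct states and cost at most `|Q|`.

The states treated in this way are removed from the game. Plays that reach them are already won, and
the argument can be repeated until the initial state is removed.
-/

section Sequences

open Filter

lemma eventually_succ_eq_of_eventually_succ_le {α : Type*} [PartialOrder α] [WellFoundedLT α]
    {r : ℕ → α} (h : ∀ᶠ n in atTop, r (n + 1) ≤ r n) : ∀ᶠ n in atTop, r (n + 1) = r n := by
  obtain ⟨N, hN⟩ := eventually_atTop.1 h
  have hanti : Antitone fun n => r (N + n) :=
    antitone_nat_of_succ_le fun n => hN (N + n) (Nat.le_add_right N n)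
  obtain ⟨K, hK⟩ := WellFoundedLT.antitone_chain_condition hanti
  refine eventually_atTop.2 ⟨N + K, fun n hn => ?_⟩
  obtain ⟨k, rfl⟩ := Nat.exists_eq_add_of_le hn
  simpa only [add_assoc] using
    (hK (K + (k + 1)) (Nat.le_add_right _ _)).symm.trans (hK (K + k) (Nat.le_add_right _ _))

variable {p : ℕ → ℕ}

lemma eventually_le_limsup_of_bddAbove (hp : BddAbove (Set.range p)) :
    ∀ᶠ n in atTop, p n ≤ limsup p atTop :=
  (eventually_lt_of_limsup_lt (Nat.lt_succ_self _) hp.isBoundedUnder_of_range).mono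
    fun _ => Nat.le_of_lt_succ

lemma frequently_eq_limsup_of_bddAbove (hp : BddAbove (Set.range p)) :
    ∃ᶠ n in atTop, p n = limsup p atTop := by
  have hle := eventually_le_limsup_of_bddAbove hp
  rcases Nat.eq_zero_or_pos (limsup p atTop) with h0 | hpos
  · exact (hle.mono fun n hn => by omega).frequently
  · have hlt : ∃ᶠ n in atTop, limsup p atTop - 1 < p n :=
      frequently_lt_of_lt_limsup (by isBoundedDefault) (Nat.sub_lt hpos one_pos)
    exact (hlt.and_eventually hle).mono fun n hn => by omega

end Sequences

section ProgressMeasures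

open Filter

universe u

variable {G : Type u} {E : G → ℕ → G → Prop} {d : ℕ}

/-- The parity condition holds on every infinite path of the graph `E`, where `E x p y` stands for
an edge from `x` to `y` of priority `p`. Meant for bounded priorities only: the `limsup` of an
unbounded sequence of naturals is `0`. -/
def AllPathsEven (E : G → ℕ → G → Prop) : Prop :=
  ∀ (x : ℕ → G) (p : ℕ → ℕ), (∀ n, E (x n) (p n) (x (n + 1))) → Even (limsup p atTop)

/-- `LeadsTo E d n x y`: there is a path of `n + 1` edges from `x` to `y` whose last edge has
priority `d`. -/
inductive LeadsTo (E : G → ℕ → G → Prop) (d : ℕ) : ℕ → G → G → Prop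
  | last {x y : G} : E x d y → LeadsTo E d 0 x y
  | step {n p : ℕ} {x y z : G} : E x p z → LeadsTo E d n z y → LeadsTo E d (n + 1) x y

lemma exists_path_frequently_eq {Z : Set G} (dist : G → ℕ) {z₀ : G} (hz₀ : z₀ ∈ Z)
    (hnext : ∀ z ∈ Z, ∃ p, ∃ y ∈ Z, E z p y ∧ (p = d ∨ dist y < dist z)) :
    ∃ (x : ℕ → G) (p : ℕ → ℕ),
      (∀ n, E (x n) (p n) (x (n + 1))) ∧ ∃ᶠ n in atTop, p n = d := by
  choose! prio next hmem hedge hdec using hnext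
  have hZ : ∀ n, next^[n] z₀ ∈ Z := fun n => by
    induction n with
    | zero => exact hz₀
    | succ n ih => rw [Function.iterate_succ_apply']; exact hmem _ ih
  have hreach : ∀ k n, dist (next^[n] z₀) ≤ k → ∃ m ≥ n, prio (next^[m] z₀) = d := by
    intro k
    induction k with
    | zero => exact fun n hn => ⟨n, le_rfl, (hdec _ (hZ n)).resolve_right (by omega)⟩
    | succ k ih =>
      intro n hn
      rcases hdec _ (hZ n) with hd | hlt
      · exact ⟨n, le_rfl, hd⟩
      · obtain ⟨m, hm, hd⟩ := ih (n + 1) (by rw [Function.iterate_succ_apply']; omega)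
        exact ⟨m, by omega, hd⟩
  refine ⟨fun n => next^[n] z₀, fun n => prio (next^[n] z₀), fun n => ?_,
    frequently_atTop.2 fun n => hreach _ n le_rfl⟩
  simpa only [Function.iterate_succ_apply'] using hedge _ (hZ n)

lemma AllPathsEven.wellFounded_leadsTo (hE : ∀ {x p y}, E x p y → p ≤ d) (hd : Odd d)
    (heven : AllPathsEven E) : WellFounded fun y x => ∃ n, LeadsTo E d n x y := by
  set R : G → G → Prop := fun y x => ∃ n, LeadsTo E d n x y
  by_contra hwf
  obtain ⟨x₀, hx₀⟩ : ∃ x, ¬Acc R x := by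
    by_contra! hacc
    exact hwf ⟨hacc⟩
  let bad (x : G) (n : ℕ) : Prop := ∃ y, LeadsTo E d n x y ∧ ¬Acc R y
  have hstart : ∃ n, bad x₀ n := by
    obtain ⟨y, hy, n, hn⟩ := exists_not_acc_lt_of_not_acc hx₀
    exact ⟨n, y, hn, hy⟩
  let dist (x : G) : ℕ := sInf {n | bad x n}
  obtain ⟨x, p, hedge, hfreq⟩ := exists_path_frequently_eq (E := E) (d := d) dist
      (Z := {x | ∃ n, bad x n}) hstart fun z hz => by
    obtain ⟨y, hzy, hy⟩ : bad z (dist z) := Nat.sInf_mem hz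
    generalize hk : dist z = k at hzy ⊢
    cases hzy with
    | last h =>
      obtain ⟨y', hy', n, hn⟩ := exists_not_acc_lt_of_not_acc hy
      exact ⟨d, y, ⟨n, y', hn, hy'⟩, h, Or.inl rfl⟩
    | step h hwy =>
      exact ⟨_, _, ⟨_, y, hwy, hy⟩, h,
        Or.inr (Nat.lt_succ_of_le (Nat.sInf_le ⟨y, hwy, hy⟩))⟩
  have hlimsup : limsup p atTop = d :=
    (limsup_le_of_le (by isBoundedDefault) (Eventually.of_forall fun n => hE (hedge n))).antisymm
      (le_limsup_of_frequently_le (hfreq.mono fun n hn => hn.ge)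
        (isBoundedUnder_of ⟨d, fun n => hE (hedge n)⟩))
  exact Nat.not_even_iff_odd.2 hd (hlimsup ▸ heven x p hedge)

lemma AllPathsEven.exists_top_rank (hE : ∀ {x p y}, E x p y → p ≤ d) (heven : AllPathsEven E) :
    ∃ μ : G → Ordinal.{u}, ∀ {x p y}, E x p y → μ y ≤ μ x ∧ (p = d → Odd d → μ y < μ x) := by
  by_cases hd : Odd d
  · have : IsWellFounded G fun y x => ∃ n, LeadsTo E d n x y := ⟨heven.wellFounded_leadsTo hE hd⟩
    refine ⟨IsWellFounded.rank fun y x => ∃ n, LeadsTo E d n x y, fun {x p y} hxy => ⟨?_, ?_⟩⟩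
    · rw [IsWellFounded.rank_eq _ y, Ordinal.iSup_le_iff]
      rintro ⟨z, n, hyz⟩
      exact Order.succ_le_iff.2 (IsWellFounded.rank_lt_of_rel ⟨n + 1, .step hxy hyz⟩)
    · rintro rfl -
      exact IsWellFounded.rank_lt_of_rel ⟨0, .last hxy⟩
  · exact ⟨0, fun _ => ⟨le_rfl, fun _ h => absurd h hd⟩⟩

lemma exists_ordinal_lt_iff_lt {κ : Type*} [LinearOrder κ] [WellFoundedLT κ] (f : G → κ) :
    ∃ g : G → Ordinal.{u}, ∀ x y, g x < g y ↔ f x < f y := by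
  have : IsWellFounded G (InvImage (· < ·) f) := ⟨InvImage.wf f wellFounded_lt⟩
  have hlt : ∀ {x y}, f x < f y →
      IsWellFounded.rank (InvImage (· < ·) f) x < IsWellFounded.rank (InvImage (· < ·) f) y :=
    fun h => IsWellFounded.rank_lt_of_rel (r := InvImage (· < ·) f) h
  refine ⟨IsWellFounded.rank (InvImage (· < ·) f), fun x y => ⟨fun h => ?_, hlt⟩⟩
  by_contra! hle
  refine h.not_ge ?_
  rw [IsWellFounded.rank_eq _ y, Ordinal.iSup_le_iff]
  rintro ⟨z, hz⟩
  exact Order.succ_le_iff.2 (hlt (lt_of_lt_of_le hz hle))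

/-- A parity progress measure for the graph `E` of prioritised edges. The usual measure is a tuple
of ordinals, one for each priority and ordered lexicographically from high to low priorities;
`ρ p x` encodes its truncation to the priorities at least `p`. -/
structure IsProgressMeasure (E : G → ℕ → G → Prop) (ρ : ℕ → G → Ordinal.{u}) : Prop where
  lt_of_le : ∀ {p' p x y}, p' ≤ p → ρ p x < ρ p y → ρ p' x < ρ p' y
  le : ∀ {x p y}, E x p y → ρ p y ≤ ρ p x
  lt_of_odd : ∀ {x p y}, E x p y → Odd p → ρ p y < ρ p x

namespace IsProgressMeasure

lemma exists_of_allPathsEven (hE : ∀ {x p y}, E x p y → p < d) (heven : AllPathsEven E) :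
    ∃ ρ, IsProgressMeasure E ρ := by
  induction d generalizing E with
  | zero => exact ⟨0, ⟨fun _ h => (lt_irrefl _ h).elim, fun _ => le_rfl,
      fun h => absurd (hE h) (Nat.not_lt_zero _)⟩⟩
  | succ d ih =>
    obtain ⟨μ, hμ⟩ := heven.exists_top_rank fun h => Nat.le_of_lt_succ (hE h)
    obtain ⟨ρ', hρ'⟩ := ih (E := fun x p y => E x p y ∧ μ y = μ x ∧ p < d) (fun h => h.2.2)
      fun x p h => heven x p fun n => (h n).1
    let f (p : ℕ) (x : G) : Ordinal.{u} ×ₗ Ordinal.{u} :=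
      toLex (μ x, if p < d then ρ' p x else 0)
    choose ρ hρ using fun p => exists_ordinal_lt_iff_lt (f p)
    have hedge : ∀ {x p y}, E x p y → (ρ p y ≤ ρ p x) ∧ (Odd p → ρ p y < ρ p x) := by
      intro x p y h
      rw [← not_lt, hρ, hρ, not_lt]
      simp only [f, Prod.Lex.toLex_le_toLex, Prod.Lex.toLex_lt_toLex]
      obtain ⟨hle, hlt⟩ := hμ h
      rcases hle.lt_or_eq with hμlt | hμeq
      · exact ⟨Or.inl hμlt, fun _ => Or.inl hμlt⟩
      · by_cases hp : p < d
        · have h' : E x p y ∧ μ y = μ x ∧ p < d := ⟨h, hμeq, hp⟩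
          simp only [hp, if_true]
          exact ⟨Or.inr ⟨hμeq, hρ'.le h'⟩, fun ho => Or.inr ⟨hμeq, hρ'.lt_of_odd h' ho⟩⟩
        · obtain rfl : p = d := by have := hE h; omega
          simp only [hp, if_false]
          exact ⟨Or.inr ⟨hμeq, le_rfl⟩, fun ho => Or.inl (hlt rfl ho)⟩
    refine ⟨ρ, ⟨fun {p' p x y} hp h => ?_, fun h => (hedge h).1, fun h => (hedge h).2⟩⟩
    rw [hρ] at h ⊢
    simp only [f, Prod.Lex.toLex_lt_toLex] at h ⊢
    refine h.imp_right fun ⟨hμeq, hlt⟩ => ⟨hμeq, ?_⟩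
    by_cases hpd : p < d
    · rw [if_pos hpd, if_pos hpd] at hlt
      rw [if_pos (hp.trans_lt hpd), if_pos (hp.trans_lt hpd)]
      exact hρ'.lt_of_le hp hlt
    · rw [if_neg hpd, if_neg hpd] at hlt
      exact (lt_irrefl _ hlt).elim

lemma even_limsup {ρ : ℕ → G → Ordinal.{u}} (hρ : IsProgressMeasure E ρ) {x y : ℕ → G}
    {p : ℕ → ℕ} (hp : BddAbove (Set.range p)) (hedge : ∀ᶠ n in atTop, E (x n) (p n) (y n))
    (hjump : ∀ᶠ n in atTop, ρ 0 (x (n + 1)) ≤ ρ 0 (y n)) : Even (limsup p atTop) := by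
  by_contra hodd
  rw [Nat.not_even_iff_odd] at hodd
  set L := limsup p atTop
  have hle_of_le : ∀ {p a b}, p ≤ L → ρ p a ≤ ρ p b → ρ L a ≤ ρ L b := fun hpL h =>
    le_of_not_gt fun hlt => (hρ.lt_of_le hpL hlt).not_ge h
  have hstep : ∀ᶠ n in atTop, ρ L (x (n + 1)) ≤ ρ L (y n) ∧ ρ L (y n) ≤ ρ L (x n) := by
    filter_upwards [hedge, hjump, eventually_le_limsup_of_bddAbove hp] with n he hj hpL
    exact ⟨hle_of_le (Nat.zero_le _) hj, hle_of_le hpL (hρ.le he)⟩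
  have hconst := eventually_succ_eq_of_eventually_succ_le (r := fun n => ρ L (x n))
    (hstep.mono fun n hn => hn.1.trans hn.2)
  obtain ⟨n, hn, he, hs, hc⟩ :=
    ((frequently_eq_limsup_of_bddAbove hp).and_eventually (hedge.and (hstep.and hconst))).exists
  rw [hn] at he
  exact (hs.1.trans_lt (hρ.lt_of_odd he hodd)).ne hc

end IsProgressMeasure

end ProgressMeasures

section Requests

open Filter

variable {c : ℕ → ℕ} {i : ℕ → Bool}

/-- The number of increments in `i m, …, i (n - 1)`. -/
def incCost (i : ℕ → Bool) (m n : ℕ) : ℕ := ((Finset.Ico m n).filter fun j => i j = true).card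

/-- In the sequence of colours `c`, position `j` answers a request posed at position `n`. -/
def Answers (c : ℕ → ℕ) (n j : ℕ) : Prop := n < j ∧ Even (c j) ∧ c n < c j

/-- All but finitely many requests in `c` are answered with cost at most `B`, where `i` tells which
transitions are increments: the parity condition with costs, with an explicit bound. -/
def EventuallyAnsweredWithin (c : ℕ → ℕ) (i : ℕ → Bool) (B : ℕ) : Prop :=
  ∀ᶠ n in atTop, Odd (c n) → ∃ j, Answers c n j ∧ incCost i n j ≤ B

/-- As long as a request at position `n` is not answered, it has cost at most `K`. -/
def PendingCostLE (c : ℕ → ℕ) (i : ℕ → Bool) (K n : ℕ) : Prop :=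
  Odd (c n) → ∀ k, (∀ j < k, ¬Answers c n j) → incCost i n k ≤ K

/-- If position `n` poses a request that is never answered, then from some point on all colours are
smaller than it and there are no increments. -/
def UnansweredForgotten (c : ℕ → ℕ) (i : ℕ → Bool) (n : ℕ) : Prop :=
  Odd (c n) → (∀ j, ¬Answers c n j) → ∀ᶠ j in atTop, c j < c n ∧ i j = false

lemma incCost_mono {m n k : ℕ} (h : n ≤ k) : incCost i m n ≤ incCost i m k :=
  Finset.card_le_card (Finset.filter_subset_filter _ (Finset.Ico_subset_Ico_right h))

lemma incCost_succ {m n : ℕ} (h : m ≤ n) :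
    incCost i m (n + 1) = incCost i m n + if i n = true then 1 else 0 := by
  rw [incCost, incCost, ← Finset.insert_Ico_right_eq_Ico_add_one h, Finset.filter_insert]
  split_ifs
  · exact Finset.card_insert_of_notMem (by simp)
  · rfl

lemma incCost_add (s m n : ℕ) : incCost (fun k => i (k + s)) m n = incCost i (m + s) (n + s) := by
  rw [incCost, incCost, ← Finset.map_add_right_Ico, Finset.filter_map, Finset.card_map]
  rfl

lemma eventually_eq_false_of_incCost_le {m K : ℕ} (h : ∀ n, incCost i m n ≤ K) :
    ∀ᶠ n in atTop, i n = false := by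
  have hconst := eventually_succ_eq_of_eventually_succ_le (r := fun n => K - incCost i m n)
    (Eventually.of_forall fun n => Nat.sub_le_sub_left (incCost_mono n.le_succ) K)
  filter_upwards [hconst, eventually_ge_atTop m] with n hn hmn
  by_contra hi
  have hsucc := incCost_succ (i := i) hmn
  rw [if_pos (by simpa using hi)] at hsucc
  have := h (n + 1)
  omega

lemma answers_add {s n j : ℕ} : Answers (fun k => c (k + s)) n j ↔ Answers c (n + s) (j + s) := by
  simp only [Answers, add_lt_add_iff_right]

lemma forall_not_answers_add {s n : ℕ} (h : ∀ j, ¬Answers (fun k => c (k + s)) n j) (j : ℕ) :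
    ¬Answers c (n + s) j := fun hj => by
  obtain ⟨k, rfl⟩ := Nat.exists_eq_add_of_le' (show s ≤ j from by have := hj.1; omega)
  exact h k (answers_add.2 hj)

lemma EventuallyAnsweredWithin.of_add {s B : ℕ}
    (h : EventuallyAnsweredWithin (fun n => c (n + s)) (fun n => i (n + s)) B) :
    EventuallyAnsweredWithin c i B := by
  rw [EventuallyAnsweredWithin, ← map_add_atTop_eq_nat s, eventually_map]
  refine h.mono fun n hn hodd => ?_
  obtain ⟨j, hj, hcost⟩ := hn hodd
  exact ⟨j + s, answers_add.1 hj, incCost_add s n j ▸ hcost⟩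

lemma UnansweredForgotten.add {s n : ℕ} (h : UnansweredForgotten c i (n + s)) :
    UnansweredForgotten (fun k => c (k + s)) (fun k => i (k + s)) n := fun hodd hj =>
  (tendsto_add_atTop_nat s).eventually (h hodd (forall_not_answers_add hj))

lemma EventuallyAnsweredWithin.eventually_pendingCostLE {B : ℕ}
    (h : EventuallyAnsweredWithin c i B) : ∀ᶠ n in atTop, PendingCostLE c i B n := by
  refine h.mono fun n hn hodd k hk => ?_
  obtain ⟨j, hj, hcost⟩ := hn hodd
  exact (incCost_mono (le_of_not_gt fun hjk => hk j hjk hj)).trans hcost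

lemma EventuallyAnsweredWithin.eventually_answered {B : ℕ}
    (h : EventuallyAnsweredWithin c i B) : ∀ᶠ n in atTop, Odd (c n) → ∃ j, Answers c n j :=
  h.mono fun _ hn hodd => (hn hodd).imp fun _ => And.left

lemma PendingCostLE.unansweredForgotten {K n : ℕ} (h : PendingCostLE c i K n)
    (hans : ∀ᶠ n in atTop, Odd (c n) → ∃ j, Answers c n j) : UnansweredForgotten c i n := by
  intro hodd hn
  refine Eventually.and ?_ (eventually_eq_false_of_incCost_le fun k => h hodd k fun j _ => hn j)
  filter_upwards [hans, eventually_gt_atTop n] with j hj hnj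
  by_contra! hle
  rcases Nat.even_or_odd (c j) with heven | hodd'
  · exact hn j ⟨hnj, heven, hle.lt_of_ne fun heq => Nat.not_even_iff_odd.2 hodd (heq ▸ heven)⟩
  · obtain ⟨k, hjk, heven, hlt⟩ := hj hodd'
    exact hn k ⟨hnj.trans hjk, heven, hle.trans_lt hlt⟩

lemma eventually_answered_of_unansweredForgotten (h : ∀ n, UnansweredForgotten c i n) :
    ∀ᶠ n in atTop, Odd (c n) → ∃ j, Answers c n j := by
  by_contra hfreq
  simp only [not_eventually, Classical.not_imp, not_exists] at hfreq
  obtain ⟨n, ⟨hodd, hn⟩, hmin⟩ := exists_minimalFor_of_wellFoundedLT _ c hfreq.exists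
  obtain ⟨k, hk, hlt, -⟩ := (hfreq.and_eventually (h n hodd hn)).exists
  exact hlt.not_ge (hmin hk hlt.le)

/-- The largest open request after reading colour `c`, if it was `m` before; `0` means that no
request is open. Answering the largest open request answers all others, too. -/
def updateOpen (m c : ℕ) : ℕ := if Odd c then max m c else if m < c then 0 else m

/-- The largest open request after each position of the sequence of colours `c`, with `0` for no
open request. -/
def largestOpen (c : ℕ → ℕ) : ℕ → ℕ
  | 0 => updateOpen 0 (c 0)
  | n + 1 => updateOpen (largestOpen c n) (c (n + 1))

/-- The priority of a transition from a state of colour `c` when the largest open request is `m`: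
an increment counts as another occurrence of that request. With these priorities the parity
condition forbids infinitely many increments while a request stays open. -/
def transPriority (inc : Bool) (c m : ℕ) : ℕ := if inc = true then max c m else c

lemma updateOpen_eq_zero_or_odd {m : ℕ} (hm : m = 0 ∨ Odd m) (c : ℕ) :
    updateOpen m c = 0 ∨ Odd (updateOpen m c) := by
  unfold updateOpen
  split_ifs with hc
  · right
    rcases max_choice m c with h | h <;> grind
  · exact Or.inl rfl
  · exact hm

lemma updateOpen_le {m c D : ℕ} (hm : m ≤ D) (hc : c ≤ D) : updateOpen m c ≤ D := by
  unfold updateOpen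
  split_ifs <;> omega

lemma le_updateOpen_of_odd {c : ℕ} (hc : Odd c) (m : ℕ) : c ≤ updateOpen m c := by
  simp [updateOpen, hc]

lemma le_updateOpen {r m c : ℕ} (hr : r ≤ m) (hc : ¬(Even c ∧ r < c)) : m ≤ updateOpen m c := by
  rw [← Nat.not_odd_iff_even] at hc
  unfold updateOpen
  split_ifs <;> grind

lemma largestOpen_le {D : ℕ} (hc : ∀ n, c n ≤ D) (n : ℕ) : largestOpen c n ≤ D := by
  induction n with
  | zero => exact updateOpen_le (Nat.zero_le D) (hc 0)
  | succ n ih => exact updateOpen_le ih (hc (n + 1))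

lemma exists_open_request {n : ℕ} (h : largestOpen c n ≠ 0) :
    ∃ j ≤ n, c j = largestOpen c n ∧ ∀ k ≤ n, ¬Answers c j k := by
  induction n with
  | zero =>
    refine ⟨0, le_rfl, ?_, fun k hk hans => by have := hans.1; omega⟩
    simp only [largestOpen, updateOpen] at h ⊢
    grind
  | succ n ih =>
    by_cases hnew : largestOpen c (n + 1) = c (n + 1)
    · exact ⟨n + 1, le_rfl, hnew.symm, fun k hk hans => by have := hans.1; omega⟩
    · have hold : largestOpen c (n + 1) = largestOpen c n ∧
          ¬(Even (c (n + 1)) ∧ largestOpen c n < c (n + 1)) := by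
        rw [← Nat.not_odd_iff_even]
        simp only [largestOpen, updateOpen] at h hnew ⊢
        grind
      obtain ⟨j, hjn, hj, hopen⟩ := ih (hold.1 ▸ h)
      refine ⟨j, hjn.trans n.le_succ, hj.trans hold.1.symm, fun k hk hans => ?_⟩
      rcases hk.lt_or_eq with hlt | rfl
      · exact hopen k (Nat.le_of_lt_succ hlt) hans
      · exact hold.2 ⟨hans.2.1, hj ▸ hans.2.2⟩

lemma le_transPriority (inc : Bool) (c m : ℕ) : c ≤ transPriority inc c m := by
  unfold transPriority
  split_ifs <;> omega

lemma transPriority_le {inc : Bool} {c m D : ℕ} (hc : c ≤ D) (hm : m ≤ D) :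
    transPriority inc c m ≤ D := by
  unfold transPriority
  split_ifs <;> omega

lemma transPriority_eq_or_eq (inc : Bool) (c m : ℕ) :
    transPriority inc c m = c ∨ transPriority inc c m = m := by
  unfold transPriority
  split_ifs <;> omega

lemma even_limsup_transPriority {D : ℕ} (hc : ∀ n, c n ≤ D)
    (h : ∀ n, UnansweredForgotten c i n) :
    Even (limsup (fun n => transPriority (i n) (c n) (largestOpen c n)) atTop) := by
  set p : ℕ → ℕ := fun n => transPriority (i n) (c n) (largestOpen c n)
  by_contra hL
  rw [Nat.not_even_iff_odd] at hL
  have hp : BddAbove (Set.range p) :=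
    ⟨D, Set.forall_mem_range.2 fun n => transPriority_le (hc n) (largestOpen_le hc n)⟩
  have hfreq := frequently_eq_limsup_of_bddAbove hp
  obtain ⟨N, hN⟩ := eventually_atTop.1 (eventually_le_limsup_of_bddAbove hp)
  obtain ⟨n, hNn, hn⟩ := frequently_atTop.1 hfreq N
  obtain ⟨j, hj, hopen⟩ : ∃ j, c j = limsup p atTop ∧ ∀ k ≤ n, ¬Answers c j k := by
    rcases transPriority_eq_or_eq (i n) (c n) (largestOpen c n) with heq | heq
    · exact ⟨n, heq.symm.trans hn, fun k hk hans => hk.not_gt hans.1⟩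
    · have hm : largestOpen c n = limsup p atTop := heq.symm.trans hn
      obtain ⟨j, -, hj, hopen⟩ := exists_open_request (hm ▸ hL.pos.ne')
      exact ⟨j, hj.trans hm, hopen⟩
  have hforgot := h j (hj ▸ hL) fun k hans => by
    rcases le_or_gt k n with hk | hk
    · exact hopen k hk hans
    · exact (hj ▸ hans.2.2).not_ge ((le_transPriority _ _ _).trans (hN k (hNn.trans hk.le)))
  obtain ⟨k, hk, hlt, hinc⟩ := (hfreq.and_eventually hforgot).exists
  refine hlt.ne' ?_
  rw [hj, ← hk]
  simp [p, transPriority, hinc]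

section Dominating

variable {m : ℕ → ℕ} {n r : ℕ}

lemma le_of_updateOpen_le (hr : r ≤ m n) (hopen : ∀ j > n, ¬(Even (c j) ∧ r < c j))
    (hle : ∀ j, updateOpen (m j) (c (j + 1)) ≤ m (j + 1)) : ∀ j ≥ n, r ≤ m j := fun j hj => by
  induction j, hj using Nat.le_induction with
  | base => exact hr
  | succ j hj ih =>
    exact ih.trans ((le_updateOpen ih (hopen _ (Nat.lt_succ_of_le hj))).trans (hle j))

lemma eventually_updateOpen_eq {D : ℕ} (hm : ∀ j, m j ≤ D) (hr : r ≤ m n)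
    (hopen : ∀ j > n, ¬(Even (c j) ∧ r < c j))
    (hle : ∀ j, updateOpen (m j) (c (j + 1)) ≤ m (j + 1)) :
    ∀ᶠ j in atTop, updateOpen (m j) (c (j + 1)) = m (j + 1) := by
  have hupd : ∀ j ≥ n, m j ≤ updateOpen (m j) (c (j + 1)) := fun j hj =>
    le_updateOpen (le_of_updateOpen_le hr hopen hle j hj) (hopen _ (Nat.lt_succ_of_le hj))
  have hconst := eventually_succ_eq_of_eventually_succ_le (r := fun j => D - m j)
    ((eventually_ge_atTop n).mono fun j hj => Nat.sub_le_sub_left ((hupd j hj).trans (hle j)) D)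
  filter_upwards [hconst, eventually_ge_atTop n] with j hj hnj
  have := hupd j hnj
  have := hle j
  have := hm j
  have := hm (j + 1)
  omega

end Dominating

universe u

/-- If a request stays open forever, the bounds `m n` eventually agree with the largest open
request along the play, from where on the moves `x n → y n` form a path up to decreasing the
measure. -/
lemma IsProgressMeasure.unansweredForgotten {G : Type u} {E : G → ℕ → G → Prop}
    {ρ : ℕ → G → Ordinal.{u}} (hρ : IsProgressMeasure E ρ) {x y : ℕ → G} {m : ℕ → ℕ} {D : ℕ}
    (hc : ∀ n, c n ≤ D) (hm : ∀ n, m n ≤ D) (hm_odd : ∀ n, m n = 0 ∨ Odd (m n))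
    (hcm : ∀ n, Odd (c n) → c n ≤ m n)
    (hedge : ∀ n, E (x n) (transPriority (i n) (c n) (m n)) (y n))
    (hle : ∀ n, updateOpen (m n) (c (n + 1)) ≤ m (n + 1))
    (hjump : ∀ n, updateOpen (m n) (c (n + 1)) = m (n + 1) → ρ 0 (x (n + 1)) ≤ ρ 0 (y n))
    (n : ℕ) : UnansweredForgotten c i n := by
  intro hodd hunans
  have hopen : ∀ j > n, ¬(Even (c j) ∧ c n < c j) := fun j hj h => hunans j ⟨hj, h⟩
  have hreq := le_of_updateOpen_le (hcm n hodd) hopen hle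
  set p : ℕ → ℕ := fun j => transPriority (i j) (c j) (m j)
  have hp : BddAbove (Set.range p) :=
    ⟨D, Set.forall_mem_range.2 fun j => transPriority_le (hc j) (hm j)⟩
  have heven : Even (limsup p atTop) := hρ.even_limsup hp (Eventually.of_forall hedge)
    ((eventually_updateOpen_eq hm (hcm n hodd) hopen hle).mono hjump)
  have hlt : limsup p atTop < c n := by
    obtain ⟨j, hj, hnj⟩ :=
      ((frequently_eq_limsup_of_bddAbove hp).and_eventually (eventually_gt_atTop n)).exists
    have hjc : c j = limsup p atTop := by
      refine (transPriority_eq_or_eq (i j) (c j) (m j)).elim (fun heq => heq.symm.trans hj)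
        fun heq => ?_
      rcases hm_odd j with hzero | hmodd
      · exact absurd (hreq j hnj.le) (by have := hodd.pos; omega)
      · exact absurd (heq.symm.trans hj ▸ hmodd) (Nat.not_odd_iff_even.2 heven)
    have hle_c : limsup p atTop ≤ c n := le_of_not_gt fun h => hopen j hnj (hjc ▸ ⟨heven, h⟩)
    exact hle_c.lt_of_ne fun heq => Nat.not_even_iff_odd.2 hodd (heq ▸ heven)
  filter_upwards [eventually_le_limsup_of_bddAbove hp, eventually_ge_atTop n] with j hj hnj
  refine ⟨((le_transPriority _ _ _).trans hj).trans_lt hlt, Bool.eq_false_iff.2 fun hinc => ?_⟩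
  have hmj : m j ≤ limsup p atTop :=
    (le_max_right (c j) (m j)).trans (by simpa [p, transPriority, hinc] using hj)
  exact hlt.not_ge ((hreq j hnj).trans hmj)

end Requests

section MoveSequences

open PiNat

variable {I ι : Type*}

lemma isClosed_of_forall_cylinder_subset [TopologicalSpace I] [DiscreteTopology I]
    {S : Set (ℕ → I)} {n : ℕ} (h : ∀ α ∈ S, cylinder α n ⊆ S) : IsClosed S :=
  isOpen_compl_iff.1 <| isOpen_iff_forall_mem_open.2 fun α hα =>
    ⟨cylinder α n, fun β hβα hβ => hα (h β hβ ((mem_cylinder_comm _ _ _).1 hβα)),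
      isOpen_cylinder _ α n, self_mem_cylinder α n⟩

lemma exists_inter_cylinder_subset [TopologicalSpace I] [DiscreteTopology I] [Countable ι]
    {C : Set (ℕ → I)} (hC : IsClosed C) (hne : C.Nonempty) {F : ι → Set (ℕ → I)}
    (hF : ∀ k, IsClosed (F k)) (hCF : C ⊆ ⋃ k, F k) :
    ∃ α ∈ C, ∃ n k, C ∩ cylinder α n ⊆ F k := by
  have : TopologicalSpace.IsCompletelyMetrizableSpace C := hC.isCompletelyMetrizableSpace
  have : Nonempty C := hne.to_subtype
  obtain ⟨k, ⟨α, hαC⟩, hα⟩ := nonempty_interior_of_iUnion_of_closed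
    (f := fun k => ((↑) : C → ℕ → I) ⁻¹' F k) (fun k => (hF k).preimage continuous_subtype_val)
    (by rw [← Set.preimage_iUnion]; exact Set.eq_univ_of_forall fun γ => hCF γ.2)
  obtain ⟨V, hVF, hVopen, hαV⟩ := mem_interior.1 hα
  obtain ⟨U, hU, rfl⟩ := isOpen_induced_iff.1 hVopen
  obtain ⟨_, ⟨β, n, rfl⟩, hαβ, hβU⟩ :=
    (isTopologicalBasis_cylinders fun _ : ℕ => I).exists_subset_of_mem_open hαV hU
  rw [← mem_cylinder_iff_eq.1 hαβ] at hβU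
  exact ⟨α, hαC, n, k, fun γ ⟨hγC, hγ⟩ => @hVF ⟨γ, hγC⟩ (hβU hγ)⟩

lemma exists_forall_res_add_length (l : List I) (β : ℕ → I) :
    ∃ α, ∀ n, res α (n + l.length) = res β n ++ l := by
  induction l generalizing β with
  | nil => exact ⟨β, by simp⟩
  | cons a l ih =>
    let β' : ℕ → I := fun n => n.casesOn a β
    have hβ' : ∀ n, res β' (n + 1) = res β n ++ [a] := fun n => by
      induction n with
      | zero => rfl
      | succ n ih => rw [res_succ, ih, res_succ]; rfl
    obtain ⟨α, hα⟩ := ih β'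
    refine ⟨α, fun n => ?_⟩
    rw [List.length_cons, ← add_assoc, add_right_comm, hα, hβ', List.append_assoc,
      List.singleton_append]

lemma res_suffix_res_add (α : ℕ → I) (k n : ℕ) : res α k <:+ res α (n + k) := by
  induction n with
  | zero => rw [Nat.zero_add]
  | succ n ih => rw [Nat.succ_add]; exact ih.trans (List.suffix_cons _ _)

end MoveSequences

namespace PACost

section Runs

open Filter

variable {Q A : Type} (M : PACost Q A)

/-- The sequence of colours of the run on `w` from `q₀`. -/
def runColor (q₀ : Q) (w : ℕ → A) (n : ℕ) : ℕ := M.Ω (M.stateAt q₀ w n)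

/-- The sequence of increments along the run on `w` from `q₀`. -/
def runInc (q₀ : Q) (w : ℕ → A) (n : ℕ) : Bool := M.Cst (M.stateAt q₀ w n) (w n)

/-- The run on `w` from `q₀` satisfies the parity condition with costs, with bound `B`. -/
def AnswersWithin (q₀ : Q) (w : ℕ → A) (B : ℕ) : Prop :=
  EventuallyAnsweredWithin (M.runColor q₀ w) (M.runInc q₀ w) B

/-- Along the run on `w` from `q₀`, every request that is never answered is eventually larger than
all colours and no longer causes any cost. -/
def ForgetsUnanswered (q₀ : Q) (w : ℕ → A) : Prop :=
  ∀ n, UnansweredForgotten (M.runColor q₀ w) (M.runInc q₀ w) n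

/-- The run on `w` from `q₀` only uses transitions from `T`, given by their source and letter. -/
def RunsIn (T : Set (Q × A)) (q₀ : Q) (w : ℕ → A) : Prop := ∀ n, (M.stateAt q₀ w n, w n) ∈ T

variable {M} {q₀ : Q} {w v : ℕ → A}

lemma stateAt_eq_of_succ {q : ℕ → Q} (h0 : q 0 = q₀) (h : ∀ n, q (n + 1) = M.δ (q n) (w n))
    (n : ℕ) : M.stateAt q₀ w n = q n := by
  induction n with
  | zero => exact h0.symm
  | succ n ih => rw [stateAt, ih, h]

lemma stateAt_congr {n : ℕ} (h : ∀ k < n, w k = v k) : M.stateAt q₀ w n = M.stateAt q₀ v n := by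
  induction n with
  | zero => rfl
  | succ n ih => rw [stateAt, stateAt, ih fun k hk => h k (hk.trans n.lt_succ_self),
      h n n.lt_succ_self]

lemma stateAt_add (s n : ℕ) :
    M.stateAt q₀ w (n + s) = M.stateAt (M.stateAt q₀ w s) (fun k => w (k + s)) n :=
  (stateAt_eq_of_succ (q := fun n => M.stateAt q₀ w (n + s)) (by rw [Nat.zero_add])
    (fun n => by rw [Nat.add_right_comm, stateAt]) n).symm

lemma runColor_add (s : ℕ) :
    M.runColor (M.stateAt q₀ w s) (fun k => w (k + s)) = fun n => M.runColor q₀ w (n + s) :=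
  funext fun n => by rw [runColor, runColor, stateAt_add]

lemma runInc_add (s : ℕ) :
    M.runInc (M.stateAt q₀ w s) (fun k => w (k + s)) = fun n => M.runInc q₀ w (n + s) :=
  funext fun n => by rw [runInc, runInc, stateAt_add]

lemma AnswersWithin.of_add {s B : ℕ}
    (h : M.AnswersWithin (M.stateAt q₀ w s) (fun k => w (k + s)) B) : M.AnswersWithin q₀ w B := by
  rw [AnswersWithin, runColor_add, runInc_add] at h
  exact EventuallyAnsweredWithin.of_add h

lemma exists_answersWithin_of_accepting (h : M.Accepting q₀ w) : ∃ B, M.AnswersWithin q₀ w B := by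
  obtain ⟨B, hB⟩ := ENat.ne_top_iff_exists.1 (ne_of_lt h)
  have hlt : limsup (fun n => M.Cor q₀ w n) atTop < ((B + 1 : ℕ) : ℕ∞) :=
    hB ▸ Nat.cast_lt.2 B.lt_succ_self
  refine ⟨B + 1, (eventually_lt_of_limsup_lt hlt).mono fun n hn hodd => ?_⟩
  rw [runColor] at hodd
  rw [Cor, if_neg (Nat.not_even_iff_odd.2 hodd), sInf_lt_iff] at hn
  obtain ⟨_, ⟨j, hnj, ⟨-, hcol, heven⟩, rfl⟩, hcost⟩ := hn
  exact ⟨j, ⟨hnj, heven, hcol⟩, (Nat.cast_lt.1 hcost).le⟩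

lemma AnswersWithin.limsup_cor_le {B : ℕ} (h : M.AnswersWithin q₀ w B) :
    limsup (fun n => M.Cor q₀ w n) atTop ≤ (B : ℕ∞) := by
  refine limsup_le_of_le (h := h.mono fun n hn => ?_)
  rw [Cor]
  split_ifs with heven
  · exact zero_le
  · obtain ⟨j, ⟨hnj, hj, hcol⟩, hcost⟩ := hn (Nat.not_even_iff_odd.1 heven)
    refine le_trans (sInf_le ?_) (Nat.cast_le.2 hcost)
    exact ⟨j, hnj, ⟨⟨_, rfl⟩, hcol, hj⟩, rfl⟩

end Runs

section Pumping

variable {Q A : Type} {M : PACost Q A} {T : Set (Q × A)} {q₀ : Q} {w : ℕ → A}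

/-- The positions visited when reading `0, …, m + d - 1` once and then repeating the last `d`
positions forever. -/
def lasso (m d k : ℕ) : ℕ := if k < m then k else m + (k - m) % d

lemma lasso_of_le {m d k : ℕ} (hk : k ≤ m) : lasso m d k = k := by
  rcases hk.lt_or_eq with h | rfl
  · exact if_pos h
  · simp [lasso]

lemma le_lasso {m d n k : ℕ} (hn : n ≤ m) (hk : n ≤ k) : n ≤ lasso m d k := by
  unfold lasso
  split_ifs <;> omega

lemma lasso_lt {m d : ℕ} (hd : 0 < d) (k : ℕ) : lasso m d k < m + d := by
  unfold lasso
  split_ifs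
  · omega
  · exact Nat.add_lt_add_left (Nat.mod_lt _ hd) m

lemma lasso_succ (m d k : ℕ) :
    lasso m d (k + 1) = lasso m d k + 1 ∨ lasso m d k + 1 = m + d ∧ lasso m d (k + 1) = m := by
  rcases lt_or_ge k m with hk | hk
  · exact Or.inl (by rw [lasso_of_le hk, lasso_of_le hk.le])
  · obtain ⟨t, rfl⟩ := Nat.exists_eq_add_of_le hk
    have hlasso : ∀ t, lasso m d (m + t) = m + t % d := fun t => by simp [lasso]
    rw [add_assoc, hlasso, hlasso, ← Nat.mod_add_mod]
    rcases d.eq_zero_or_pos with rfl | hd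
    · simp only [Nat.mod_zero, add_assoc, true_or]
    · rcases (Nat.succ_le_of_lt (Nat.mod_lt t hd)).lt_or_eq with hlt | heq
      · exact Or.inl (by rw [Nat.mod_eq_of_lt hlt, add_assoc])
      · exact Or.inr ⟨by omega, by rw [← Nat.succ_eq_add_one, heq, Nat.mod_self, add_zero]⟩

lemma lasso_add_mul (m d t : ℕ) : lasso m d (m + d * t) = m := by
  simp [lasso]

lemma stateAt_lasso {m d : ℕ} (h : M.stateAt q₀ w m = M.stateAt q₀ w (m + d)) (k : ℕ) :
    M.stateAt q₀ (fun k => w (lasso m d k)) k = M.stateAt q₀ w (lasso m d k) := by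
  refine stateAt_eq_of_succ (q := fun k => M.stateAt q₀ w (lasso m d k)) ?_ (fun k => ?_) k
  · simp only [lasso_of_le (Nat.zero_le m), stateAt]
  · rw [← stateAt]
    rcases lasso_succ m d k with hk | ⟨hk, hm⟩
    · rw [hk]
    · rw [hm, Nat.succ_eq_add_one, hk, h]

/-- An increment on a loop inside the segment between a request and its first answer could be
repeated forever while the request stays open. -/
lemma incCost_le_card [Fintype Q] {n j : ℕ}
    (hT : ∀ v, M.RunsIn T q₀ v → M.ForgetsUnanswered q₀ v) (hw : M.RunsIn T q₀ w)
    (hodd : Odd (M.runColor q₀ w n)) (hfirst : ∀ k < j, ¬Answers (M.runColor q₀ w) n k) :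
    incCost (M.runInc q₀ w) n j ≤ Fintype.card Q := by
  by_contra! hlt
  obtain ⟨m, hm, d, hmd, hd, hinc, heq⟩ : ∃ m ≥ n, ∃ d, m + d < j ∧ 0 < d ∧
      M.runInc q₀ w m = true ∧ M.stateAt q₀ w m = M.stateAt q₀ w (m + d) := by
    obtain ⟨m, hm, m', hm', hne, heq⟩ := Finset.exists_ne_map_eq_of_card_lt_of_maps_to hlt
      (f := M.stateAt q₀ w) (t := Finset.univ) fun _ _ => Finset.mem_univ _
    simp only [Finset.mem_filter, Finset.mem_Ico] at hm hm'
    rcases hne.lt_or_gt with hlt | hlt <;> obtain ⟨d, rfl⟩ := Nat.exists_eq_add_of_lt hlt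
    · exact ⟨m, hm.1.1, d + 1, hm'.1.2, d.succ_pos, hm.2, heq⟩
    · exact ⟨m', hm'.1.1, d + 1, hm.1.2, d.succ_pos, hm'.2, heq.symm⟩
  set v : ℕ → A := fun k => w (lasso m d k)
  have hstate := stateAt_lasso heq
  have hcolor : ∀ k, M.runColor q₀ v k = M.runColor q₀ w (lasso m d k) := fun k => by
    rw [runColor, hstate, runColor]
  have hn : M.runColor q₀ v n = M.runColor q₀ w n := by rw [hcolor, lasso_of_le hm]
  have hforget := hT v (fun k => by rw [hstate]; exact hw _) n (hn ▸ hodd) fun k hk => by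
    rw [Answers, hn, hcolor] at hk
    have hnk : n ≠ lasso m d k := fun h => by
      have := hk.2.2
      rw [← h] at this
      exact this.ne rfl
    exact hfirst _ ((lasso_lt hd k).trans hmd)
      ⟨(le_lasso hm hk.1.le).lt_of_ne hnk, hk.2⟩
  obtain ⟨N, hN⟩ := Filter.eventually_atTop.1 hforget
  have hfalse := (hN (m + d * N) (by nlinarith)).2
  rw [runInc, hstate] at hfalse
  simp only [v, lasso_add_mul] at hfalse
  exact Bool.false_ne_true (hfalse.symm.trans hinc)

lemma AnswersWithin.of_forall_forgetsUnanswered [Fintype Q]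
    (hT : ∀ v, M.RunsIn T q₀ v → M.ForgetsUnanswered q₀ v) (hw : M.RunsIn T q₀ w) :
    M.AnswersWithin q₀ w (Fintype.card Q) := by
  refine (eventually_answered_of_unansweredForgotten (hT w hw)).mono fun n hn hodd => ?_
  have hans := hn hodd
  exact ⟨Nat.find hans, Nat.find_spec hans,
    incCost_le_card hT hw hodd fun k hk => Nat.find_min hans hk⟩

end Pumping

section Strategies

open PiNat

variable {Q I O : Type} (M : PACost Q (I × O)) (q₀ : Q) (τ : List I → O)

/-- The word produced when Player I plays `α` and Player O answers according to `τ`, which reads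
the moves made so far with the most recent one first. In that order, the strategy for the subgame
after the moves `l` is simply `fun l' => τ (l' ++ l)`. -/
def outcome (α : ℕ → I) (n : ℕ) : I × O := (α n, τ (res α (n + 1)))

/-- The state reached from `q₀` after the moves `l`, most recent one first, answered by `τ`. -/
def histState : List I → Q
  | [] => q₀
  | a :: l => M.δ (histState l) (a, τ (a :: l))

/-- The largest open request after the moves `l`, with `0` for no open request. -/
def histOpen : List I → ℕ
  | [] => updateOpen 0 (M.Ω q₀)
  | a :: l => updateOpen (histOpen l) (M.Ω (M.histState q₀ τ (a :: l)))

/-- No state visited during the moves `l` lies in `X`. -/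
def HistAvoids (X : Set Q) (l : List I) : Prop := ∀ l', l' <:+ l → M.histState q₀ τ l' ∉ X

/-- The tree of histories avoiding `X`, as a graph with priorities. -/
def historyGraph (X : Set Q) (l : List I) (p : ℕ) (l' : List I) : Prop :=
  M.HistAvoids q₀ τ X l' ∧ ∃ a, l' = a :: l ∧
    p = transPriority (M.Cst (M.histState q₀ τ l) (a, τ l')) (M.Ω (M.histState q₀ τ l))
      (M.histOpen q₀ τ l)

variable {M q₀ τ} {X : Set Q} {α : ℕ → I}

lemma stateAt_outcome (n : ℕ) : M.stateAt q₀ (outcome τ α) n = M.histState q₀ τ (res α n) :=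
  stateAt_eq_of_succ (q := fun n => M.histState q₀ τ (res α n)) rfl (fun _ => rfl) n

lemma histOpen_res (n : ℕ) :
    M.histOpen q₀ τ (res α n) = largestOpen (M.runColor q₀ (outcome τ α)) n := by
  induction n with
  | zero => rfl
  | succ n ih => rw [largestOpen, ← ih, runColor, stateAt_outcome]; rfl

lemma histOpen_eq_zero_or_odd (l : List I) :
    M.histOpen q₀ τ l = 0 ∨ Odd (M.histOpen q₀ τ l) := by
  induction l with
  | nil => exact updateOpen_eq_zero_or_odd (Or.inl rfl) _
  | cons a l ih => exact updateOpen_eq_zero_or_odd ih _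

lemma histOpen_le {D : ℕ} (hD : ∀ q, M.Ω q ≤ D) (l : List I) : M.histOpen q₀ τ l ≤ D := by
  induction l with
  | nil => exact updateOpen_le (Nat.zero_le D) (hD _)
  | cons a l ih => exact updateOpen_le ih (hD _)

lemma le_histOpen_of_odd {l : List I} (h : Odd (M.Ω (M.histState q₀ τ l))) :
    M.Ω (M.histState q₀ τ l) ≤ M.histOpen q₀ τ l := by
  cases l <;> exact le_updateOpen_of_odd h _

lemma histAvoids_nil (h : q₀ ∉ X) : M.HistAvoids q₀ τ X [] := fun l hl => by
  rwa [List.suffix_nil.1 hl]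

lemma HistAvoids.cons {a : I} {l : List I} (hl : M.HistAvoids q₀ τ X l)
    (ha : M.histState q₀ τ (a :: l) ∉ X) : M.HistAvoids q₀ τ X (a :: l) := fun l' hl' => by
  rcases List.suffix_cons_iff.1 hl' with rfl | h
  · exact ha
  · exact hl l' h

lemma exists_outcome_add_length (l : List I) (β : ℕ → I) :
    ∃ α, res α l.length = l ∧
      (fun n => outcome τ α (n + l.length)) = outcome (fun l' => τ (l' ++ l)) β := by
  obtain ⟨α, hα⟩ := exists_forall_res_add_length l β
  refine ⟨α, by simpa using hα 0, funext fun n => ?_⟩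
  have hsucc := hα (n + 1)
  rw [Nat.add_right_comm] at hsucc
  refine Prod.ext ?_ (congrArg τ hsucc)
  exact (List.cons_eq_cons.1 hsucc).1

lemma outcome_congr {β : ℕ → I} {n : ℕ} (h : β ∈ cylinder α n) {k : ℕ} (hk : k < n) :
    outcome τ β k = outcome τ α k := by
  rw [mem_cylinder_iff] at h
  exact Prod.ext (h k hk) (congrArg τ (res_eq_res.2 fun j hj => h j (by omega)))

lemma stateAt_outcome_congr {β : ℕ → I} {n : ℕ} (h : β ∈ cylinder α n) {k : ℕ} (hk : k ≤ n) :
    M.stateAt q₀ (outcome τ β) k = M.stateAt q₀ (outcome τ α) k :=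
  stateAt_congr fun _ hj => outcome_congr h (hj.trans_le hk)

lemma isClosed_setOf_pendingCostLE [TopologicalSpace I] [DiscreteTopology I] (K n : ℕ) :
    IsClosed
      {α | PendingCostLE (M.runColor q₀ (outcome τ α)) (M.runInc q₀ (outcome τ α)) K n} := by
  have hset : {α | PendingCostLE (M.runColor q₀ (outcome τ α)) (M.runInc q₀ (outcome τ α)) K n} =
      ⋂ k, {α | Odd (M.runColor q₀ (outcome τ α) n) →
        (∀ j < k, ¬Answers (M.runColor q₀ (outcome τ α)) n j) →
        incCost (M.runInc q₀ (outcome τ α)) n k ≤ K} := by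
    ext α
    simp only [PendingCostLE, Set.mem_iInter, Set.mem_ofPred_eq]
    exact forall_comm
  rw [hset]
  refine isClosed_iInter fun k => isClosed_of_forall_cylinder_subset (n := n + k)
    fun α hα β hβ hodd hk => ?_
  have hcolor : ∀ j ≤ n + k,
      M.runColor q₀ (outcome τ β) j = M.runColor q₀ (outcome τ α) j := fun j hj =>
    congrArg M.Ω (stateAt_outcome_congr hβ hj)
  have hcost : incCost (M.runInc q₀ (outcome τ β)) n k =
      incCost (M.runInc q₀ (outcome τ α)) n k := by
    refine congrArg Finset.card (Finset.filter_congr fun j hj => ?_)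
    have hj : j < n + k := by have := Finset.mem_Ico.1 hj; omega
    rw [runInc, runInc, stateAt_outcome_congr hβ hj.le, outcome_congr hβ hj]
  rw [hcolor n (Nat.le_add_right n k)] at hodd
  rw [hcost]
  refine hα hodd fun j hj hans => hk j hj ?_
  rwa [Answers, hcolor n (Nat.le_add_right n k), hcolor j (by omega)]

lemma isClosed_setOf_forall_stateAt_notMem [TopologicalSpace I] [DiscreteTopology I] :
    IsClosed {α | ∀ n, M.stateAt q₀ (outcome τ α) n ∉ X} := by
  simp only [Set.ofPred_forall]
  refine isClosed_iInter fun n => isClosed_of_forall_cylinder_subset (n := n) fun α hα β hβ => ?_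
  rw [Set.mem_ofPred_eq, stateAt_outcome_congr hβ le_rfl]
  exact hα

lemma forall_stateAt_outcome_notMem {β γ : ℕ → I} {s : ℕ}
    (hα : ∀ n, M.stateAt q₀ (outcome τ α) n ∉ X) (hγ : γ ∈ cylinder α s)
    (hout : (fun n => outcome τ γ (n + s)) = outcome (fun l => τ (l ++ res α s)) β)
    (hβ : ∀ n, M.stateAt (M.stateAt q₀ (outcome τ α) s)
      (outcome (fun l => τ (l ++ res α s)) β) n ∉ X) (n : ℕ) :
    M.stateAt q₀ (outcome τ γ) n ∉ X := by
  rcases le_total n s with hn | hn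
  · rw [stateAt_outcome_congr hγ hn]
    exact hα n
  · obtain ⟨k, rfl⟩ := Nat.exists_eq_add_of_le' hn
    rw [stateAt_add, stateAt_outcome_congr hγ le_rfl, hout]
    exact hβ k

/-- The Baire category argument: the plays avoiding `X` form a complete space, covered by the closed
sets of those plays in which no request after position `N` has cost more than `B`. -/
lemma exists_forgetsUnanswered_subgame (hq₀ : q₀ ∉ X)
    (hwin : ∀ α, ∃ B, M.AnswersWithin q₀ (outcome τ α) B) :
    ∃ q₁ ∉ X, ∃ τ₁ : List I → O, ∀ α, (∀ n, M.stateAt q₁ (outcome τ₁ α) n ∉ X) →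
      M.ForgetsUnanswered q₁ (outcome τ₁ α) := by
  let : TopologicalSpace I := ⊥
  have : DiscreteTopology I := ⟨rfl⟩
  rcases Set.eq_empty_or_nonempty {α | ∀ n, M.stateAt q₀ (outcome τ α) n ∉ X} with hempty | hne
  · exact ⟨q₀, hq₀, τ, fun α hα => absurd hα (Set.eq_empty_iff_forall_notMem.1 hempty α)⟩
  obtain ⟨α, hα, s₀, ⟨N, B⟩, hsub⟩ :=
    exists_inter_cylinder_subset isClosed_setOf_forall_stateAt_notMem hne
      (F := fun NB : ℕ × ℕ => ⋂ n ≥ NB.1, {α | PendingCostLE (M.runColor q₀ (outcome τ α))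
        (M.runInc q₀ (outcome τ α)) NB.2 n})
      (fun NB => isClosed_biInter fun n _ => isClosed_setOf_pendingCostLE NB.2 n) fun α _ => by
        obtain ⟨B, hB⟩ := hwin α
        obtain ⟨N, hN⟩ := Filter.eventually_atTop.1 hB.eventually_pendingCostLE
        exact Set.mem_iUnion.2 ⟨(N, B), Set.mem_iInter₂.2 hN⟩
  obtain ⟨s, hs, hNs⟩ : ∃ s, s₀ ≤ s ∧ N ≤ s := ⟨_, le_max_left s₀ N, le_max_right s₀ N⟩
  refine ⟨M.stateAt q₀ (outcome τ α) s, hα s, fun l => τ (l ++ res α s), fun β hβ n => ?_⟩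
  obtain ⟨γ, hγ, hout⟩ := exists_outcome_add_length (τ := τ) (res α s) β
  rw [res_length] at hγ hout
  have hγα : γ ∈ cylinder α s := by rwa [cylinder_eq_res]
  have hγX := forall_stateAt_outcome_notMem hα hγα hout hβ
  have hpending := Set.mem_iInter₂.1 (hsub ⟨hγX, cylinder_anti α hs hγα⟩) (n + s)
    (le_add_left hNs)
  obtain ⟨B', hB'⟩ := hwin γ
  rw [← hout, ← stateAt_outcome_congr hγα le_rfl, runColor_add, runInc_add]
  exact (hpending.unansweredForgotten hB'.eventually_answered).add

lemma allPathsEven_historyGraph {D : ℕ} (hD : ∀ q, M.Ω q ≤ D)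
    (h : ∀ α, (∀ n, M.stateAt q₀ (outcome τ α) n ∉ X) → M.ForgetsUnanswered q₀ (outcome τ α)) :
    AllPathsEven (M.historyGraph q₀ τ X) := by
  intro x p hx
  choose hav a hcons hp using hx
  obtain ⟨α, hα⟩ := exists_forall_res_add_length (x 0) a
  have hres : ∀ n, res α (n + (x 0).length) = x n := fun n => by
    rw [hα]
    induction n with
    | zero => rfl
    | succ n ih => rw [hcons, res_succ, List.cons_append, ih]
  have havoid : ∀ n, M.stateAt q₀ (outcome τ α) n ∉ X := fun n => by
    rw [stateAt_outcome]
    refine hav n _ ?_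
    rw [← hres, show n + 1 + (x 0).length = (x 0).length + 1 + n by omega]
    exact res_suffix_res_add α n _
  have hletter : ∀ n, outcome τ α (n + (x 0).length) = (a n, τ (x (n + 1))) := fun n => by
    have hsucc := hres (n + 1)
    rw [Nat.add_right_comm] at hsucc
    exact Prod.ext (List.cons_eq_cons.1 (hsucc.trans (hcons n))).1 (congrArg τ hsucc)
  have hprio : p = fun n => transPriority (M.runInc q₀ (outcome τ α) (n + (x 0).length))
      (M.runColor q₀ (outcome τ α) (n + (x 0).length))
      (largestOpen (M.runColor q₀ (outcome τ α)) (n + (x 0).length)) := funext fun n => by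
    rw [hp, ← histOpen_res, runColor, runInc, stateAt_outcome, hres, hletter]
  rw [hprio]
  exact (Filter.limsup_nat_add (fun n => transPriority (M.runInc q₀ (outcome τ α) n)
    (M.runColor q₀ (outcome τ α) n) (largestOpen (M.runColor q₀ (outcome τ α)) n)) _).symm ▸
      even_limsup_transPriority (fun n => hD _) (h α havoid)

end Strategies

section Positional

variable {Q I O : Type} {M : PACost Q (I × O)}

/-- The transitions from states in `X` that are consistent with the positional strategy `σ`, given
by their source and letter. -/
def stratTrans (X : Set Q) (σ : Q → I → O) : Set (Q × I × O) :=
  {t | t.1 ∈ X ∧ t.2.2 = σ t.1 t.2.1}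

/-- `r` is the worst history leading to `q` and avoiding `X`: it has the largest open request and,
among the histories with that open request, the least value of `μ`. -/
structure IsWorstHistory (M : PACost Q (I × O)) (q₀ : Q) (τ : List I → O) (X : Set Q)
    (μ : List I → Ordinal.{0}) (q : Q) (r : List I) : Prop where
  avoids : M.HistAvoids q₀ τ X r
  state_eq : M.histState q₀ τ r = q
  open_le : ∀ {l}, M.HistAvoids q₀ τ X l → M.histState q₀ τ l = q →
    M.histOpen q₀ τ l ≤ M.histOpen q₀ τ r
  measure_le : ∀ {l}, M.HistAvoids q₀ τ X l → M.histState q₀ τ l = q →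
    M.histOpen q₀ τ l = M.histOpen q₀ τ r → μ r ≤ μ l

lemma exists_isWorstHistory {q₀ q : Q} {τ : List I → O} {X : Set Q} (μ : List I → Ordinal.{0})
    {D : ℕ} (hD : ∀ q, M.Ω q ≤ D) (hq : ∃ l, M.HistAvoids q₀ τ X l ∧ M.histState q₀ τ l = q) :
    ∃ r, M.IsWorstHistory q₀ τ X μ q r := by
  obtain ⟨r, ⟨hr, hrq⟩, hmin⟩ := exists_minimalFor_of_wellFoundedLT
    (fun l => M.HistAvoids q₀ τ X l ∧ M.histState q₀ τ l = q)
    (fun l => toLex (D - M.histOpen q₀ τ l, μ l)) hq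
  have hle : ∀ {l}, M.HistAvoids q₀ τ X l → M.histState q₀ τ l = q →
      M.histOpen q₀ τ l ≤ M.histOpen q₀ τ r ∧
        (M.histOpen q₀ τ l = M.histOpen q₀ τ r → μ r ≤ μ l) := fun {l} hl hlq => by
    have hlex := le_of_not_gt fun h => (hmin ⟨hl, hlq⟩ h.le).not_gt h
    simp only [Prod.Lex.toLex_le_toLex] at hlex
    have := M.histOpen_le (q₀ := q₀) (τ := τ) hD l
    have := M.histOpen_le (q₀ := q₀) (τ := τ) hD r
    exact ⟨by omega, fun heq => hlex.elim (fun h => by omega) And.right⟩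
  exact ⟨r, hr, hrq, fun hl hlq => (hle hl hlq).1, fun hl hlq => (hle hl hlq).2⟩

lemma forgetsUnanswered_of_isWorstHistory {q₀ q : Q} {τ : List I → O} {X Y : Set Q} {D : ℕ}
    {ρ : ℕ → List I → Ordinal.{0}} (hρ : IsProgressMeasure (M.historyGraph q₀ τ X) ρ)
    (hD : ∀ q, M.Ω q ≤ D) {r : Q → List I}
    (hr : ∀ q ∈ Y, M.IsWorstHistory q₀ τ X (ρ 0) q (r q)) {w : ℕ → I × O}
    (hw : M.RunsIn (stratTrans Y fun q a => τ (a :: r q)) q w) : M.ForgetsUnanswered q w := by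
  let x (n : ℕ) : List I := r (M.stateAt q w n)
  let y (n : ℕ) : List I := (w n).1 :: x n
  have hx : ∀ n, M.IsWorstHistory q₀ τ X (ρ 0) (M.stateAt q w n) (x n) := fun n => hr _ (hw n).1
  have hletter : ∀ n, ((w n).1, τ (y n)) = w n := fun n => Prod.ext rfl (hw n).2.symm
  have hy : ∀ n, M.histState q₀ τ (y n) = M.stateAt q w (n + 1) := fun n => by
    rw [histState, (hx n).state_eq, hletter, stateAt]
  have hyX : ∀ n, M.HistAvoids q₀ τ X (y n) := fun n => (hx n).avoids.cons <| by
    rw [hy, ← (hx (n + 1)).state_eq]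
    exact (hx (n + 1)).avoids _ List.suffix_rfl
  have hopen : ∀ n, M.histOpen q₀ τ (y n) =
      updateOpen (M.histOpen q₀ τ (x n)) (M.runColor q w (n + 1)) := fun n => by
    rw [histOpen, hy, runColor]
  refine hρ.unansweredForgotten (x := x) (y := y) (m := fun n => M.histOpen q₀ τ (x n))
    (fun n => hD _) (fun n => histOpen_le hD _) (fun n => histOpen_eq_zero_or_odd _) (fun n => ?_)
    (fun n => ⟨hyX n, _, rfl, ?_⟩) (fun n => ?_) fun n heq => ?_
  · rw [runColor, ← (hx n).state_eq]
    exact le_histOpen_of_odd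
  · rw [hletter, (hx n).state_eq, runInc, runColor]
  · exact hopen n ▸ (hx (n + 1)).open_le (hyX n) (hy n)
  · exact (hx (n + 1)).measure_le (hyX n) (hy n) ((hopen n).trans heq)

lemma exists_positional_of_forgetsUnanswered {q₀ : Q} {τ : List I → O} {X : Set Q} {D : ℕ}
    (hD : ∀ q, M.Ω q ≤ D) (hq₀ : q₀ ∉ X)
    (h : ∀ α, (∀ n, M.stateAt q₀ (outcome τ α) n ∉ X) → M.ForgetsUnanswered q₀ (outcome τ α)) :
    ∃ Y : Set Q, q₀ ∈ Y ∧ ∃ σ : Q → I → O, (∀ q ∈ Y, ∀ a, M.δ q (a, σ q a) ∈ X ∪ Y) ∧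
      ∀ q w, M.RunsIn (stratTrans Y σ) q w → M.ForgetsUnanswered q w := by
  obtain ⟨ρ, hρ⟩ := IsProgressMeasure.exists_of_allPathsEven (d := D + 1)
    (fun ⟨_, _, _, hp⟩ => hp ▸ Nat.lt_succ_of_le (transPriority_le (hD _) (histOpen_le hD _)))
    (allPathsEven_historyGraph hD h)
  let Y : Set Q := {q | ∃ l, M.HistAvoids q₀ τ X l ∧ M.histState q₀ τ l = q}
  choose! r hr using fun q (hq : q ∈ Y) => exists_isWorstHistory (ρ 0) hD hq
  refine ⟨Y, ⟨[], histAvoids_nil hq₀, rfl⟩, fun q a => τ (a :: r q), fun q hq a => ?_,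
    fun q w hw => forgetsUnanswered_of_isWorstHistory hρ hD hr hw⟩
  have hnext : M.histState q₀ τ (a :: r q) = M.δ q (a, τ (a :: r q)) := by
    rw [histState, (hr q hq).state_eq]
  rw [← hnext]
  by_cases ha : M.histState q₀ τ (a :: r q) ∈ X
  · exact Or.inl ha
  · exact Or.inr ⟨_, (hr q hq).avoids.cons ha, rfl⟩

lemma stateAt_mem_of_le {X : Set Q} {q₀ : Q} {w : ℕ → I × O}
    (hX : ∀ n, M.stateAt q₀ w n ∈ X → M.stateAt q₀ w (n + 1) ∈ X) {m n : ℕ} (hmn : m ≤ n)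
    (hm : M.stateAt q₀ w m ∈ X) : M.stateAt q₀ w n ∈ X := by
  induction n, hmn using Nat.le_induction with
  | base => exact hm
  | succ n _ ih => exact hX n ih

lemma exists_forall_runsIn_outcome [Inhabited I] {X : Set Q} {q₀ : Q} (hq₀ : q₀ ∈ X)
    {σ : Q → I → O} (hclosed : ∀ q ∈ X, ∀ a, M.δ q (a, σ q a) ∈ X) :
    ∃ τ : List I → O, ∀ α, M.RunsIn (stratTrans X σ) q₀ (outcome τ α) := by
  let state : List I → Q := List.foldr (fun a q => M.δ q (a, σ q a)) q₀
  let τ : List I → O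
    | [] => σ q₀ default
    | a :: l => σ (state l) a
  refine ⟨τ, fun α n => ?_⟩
  have hstate : ∀ n, M.stateAt q₀ (outcome τ α) n = state (PiNat.res α n) :=
    stateAt_eq_of_succ rfl fun _ => rfl
  have hmem : ∀ l, state l ∈ X := fun l => by
    induction l with
    | nil => exact hq₀
    | cons a l ih => exact hclosed _ ih a
  rw [hstate]
  exact ⟨hmem _, rfl⟩

variable [Fintype Q]

/-- Player O has a positional strategy that never leaves `X` and answers almost all requests at a
cost of at most the number of states. -/
def Solved (M : PACost Q (I × O)) (X : Set Q) : Prop :=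
  ∃ σ : Q → I → O, (∀ q ∈ X, ∀ a, M.δ q (a, σ q a) ∈ X) ∧
    ∀ q w, M.RunsIn (stratTrans X σ) q w → M.AnswersWithin q w (Fintype.card Q)

lemma solved_empty [Nonempty O] : M.Solved ∅ :=
  ⟨fun _ _ => Classical.arbitrary O, fun _ hq => hq.elim, fun _ _ hw => (hw 0).1.elim⟩

lemma Solved.union {X Y : Set Q} {σ : Q → I → O} (hX : M.Solved X)
    (hclosed : ∀ q ∈ Y, ∀ a, M.δ q (a, σ q a) ∈ X ∪ Y)
    (hY : ∀ q w, M.RunsIn (stratTrans Y σ) q w → M.AnswersWithin q w (Fintype.card Q)) :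
    M.Solved (X ∪ Y) := by
  obtain ⟨σX, hclosedX, hansX⟩ := hX
  let σ' (q : Q) : I → O := if q ∈ X then σX q else σ q
  have hX' : ∀ q ∈ X, σ' q = σX q := fun q hq => if_pos hq
  have hY' : ∀ q ∉ X, σ' q = σ q := fun q hq => if_neg hq
  refine ⟨σ', fun q hq a => ?_, fun q w hw => ?_⟩
  · by_cases hqX : q ∈ X
    · exact Or.inl (hX' q hqX ▸ hclosedX q hqX a)
    · exact hY' q hqX ▸ hclosed q (hq.resolve_left hqX) a
  have hletter : ∀ n, ((w n).1, σ' (M.stateAt q w n) (w n).1) = w n := fun n =>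
    Prod.ext rfl (hw n).2.symm
  by_cases hs : ∃ s, M.stateAt q w s ∈ X
  · obtain ⟨s, hs⟩ := hs
    have hstay : ∀ n ≥ s, M.stateAt q w n ∈ X := fun n hn => stateAt_mem_of_le (fun k hk => by
      rw [stateAt, ← hletter k, hX' _ hk]
      exact hclosedX _ hk _) hn hs
    refine AnswersWithin.of_add (s := s) (hansX _ _ fun n => ?_)
    have hmem := hstay (n + s) (Nat.le_add_left s n)
    rw [← stateAt_add]
    exact ⟨hmem, hX' _ hmem ▸ (hw (n + s)).2⟩
  · rw [not_exists] at hs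
    exact hY q w fun n => ⟨(hw n).1.resolve_left (hs n), hY' _ (hs n) ▸ (hw n).2⟩

lemma Solved.exists_ssuperset {X : Set Q} {q₀ : Q} {τ : List I → O} (hX : M.Solved X)
    (hq₀ : q₀ ∉ X) (hwin : ∀ α, ∃ B, M.AnswersWithin q₀ (outcome τ α) B) :
    ∃ Y, M.Solved Y ∧ X ⊂ Y := by
  obtain ⟨D, hD⟩ := (Set.finite_range M.Ω).bddAbove
  obtain ⟨q₁, hq₁, τ₁, hτ₁⟩ := exists_forgetsUnanswered_subgame hq₀ hwin
  obtain ⟨Y, hq₁Y, σ, hclosed, hforget⟩ :=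
    exists_positional_of_forgetsUnanswered (Set.forall_mem_range.1 hD) hq₁ hτ₁
  exact ⟨X ∪ Y, hX.union hclosed fun q w => AnswersWithin.of_forall_forgetsUnanswered (hforget q),
    Set.subset_union_left, fun h => hq₁ (h (Or.inr hq₁Y))⟩

lemma exists_solved_mem {q₀ : Q} {τ : List I → O}
    (hwin : ∀ α, ∃ B, M.AnswersWithin q₀ (outcome τ α) B) : ∃ X, M.Solved X ∧ q₀ ∈ X := by
  have : Nonempty O := ⟨τ []⟩
  obtain ⟨X, hX⟩ := Set.toFinite {X | M.Solved X} |>.exists_maximal ⟨∅, M.solved_empty⟩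
  refine ⟨X, hX.prop, by_contra fun hq₀ => ?_⟩
  obtain ⟨Y, hY, hXY⟩ := hX.prop.exists_ssuperset hq₀ hwin
  exact hX.not_prop_of_gt hXY hY

end Positional

end PACost

section DelayFree

open PACost

lemma oHist_singleton {I : Type} (α : ℕ → I) (n : ℕ) :
    oHist (fun i => [α i]) n = (List.range (n + 1)).map α := by
  rw [oHist, ← List.flatMap_def, ← List.map_eq_flatMap]

lemma reverse_oHist_singleton {I : Type} (α : ℕ → I) (n : ℕ) :
    (oHist (fun i => [α i]) n).reverse = PiNat.res α (n + 1) := by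
  induction n with
  | zero => rfl
  | succ n ih =>
    rw [oHist_singleton] at ih ⊢
    rw [List.range_succ, List.map_append, List.reverse_append, ih, PiNat.res_succ _ (n + 1)]
    rfl

variable {I O : Type} [Inhabited I] {τ : List I → O}

lemma flatWord_singleton (α : ℕ → I) : flatWord (fun i => [α i]) = α := funext fun n => by
  rw [flatWord, ← oHist, oHist_singleton, List.getD_eq_getElem?_getD]
  simp

lemma constDF_zero (i : ℕ) : constDF 0 i = 1 := ite_self 1

/-- Player O reads the moves with the most recent one last, hence the reversal. -/
lemma forall_play_constDF_zero {P : (ℕ → I × O) → Prop} :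
    (∀ (u : ℕ → List I) (v : ℕ → O), (∀ i, (u i).length = constDF 0 i) →
      (∀ i, v i = τ (oHist u i).reverse) → P (fun n => (flatWord u n, v n))) ↔
      ∀ α, P (outcome τ α) := by
  simp only [constDF_zero, List.length_eq_one_iff]
  refine ⟨fun h α => ?_, fun h u v hu hv => ?_⟩
  · have hplay := h (fun i => [α i]) (fun i => τ (PiNat.res α (i + 1))) (fun i => ⟨_, rfl⟩)
      fun i => by rw [reverse_oHist_singleton]
    rwa [flatWord_singleton] at hplay
  · choose α hα using hu
    obtain rfl : u = fun i => [α i] := funext hα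
    have hout : (fun n => (flatWord (fun i => [α i]) n, v n)) = outcome τ α := funext fun n => by
      rw [flatWord_singleton, hv, reverse_oHist_singleton, outcome]
    exact hout ▸ h α

lemma oWinning_constDF_zero_iff {L : Set (ℕ → I × O)} :
    OWinning (constDF 0) L (fun l => τ l.reverse) ↔ ∀ α, outcome τ α ∈ L :=
  forall_play_constDF_zero

lemma stratCost_constDF_zero_le_iff {wc : (ℕ → I × O) → ℕ∞} {B : ℕ∞} :
    stratCost wc (constDF 0) (fun l => τ l.reverse) ≤ B ↔ ∀ α, wc (outcome τ α) ≤ B := by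
  rw [stratCost]
  simp only [iSup_le_iff, and_imp]
  exact forall_play_constDF_zero (P := fun w => wc w ≤ B)

lemma oWins_constDF_zero_iff {L : Set (ℕ → I × O)} :
    OWins (constDF 0) L ↔ ∃ τ : List I → O, ∀ α, outcome τ α ∈ L := by
  refine ⟨fun ⟨τO, hτO⟩ => ⟨fun l => τO l.reverse, oWinning_constDF_zero_iff.1 ?_⟩,
    fun ⟨τ, hτ⟩ => ⟨_, oWinning_constDF_zero_iff.2 hτ⟩⟩
  simpa only [List.reverse_reverse] using hτO

end DelayFree

theorem statement19_general {Q I O : Type} [Fintype Q] [Inhabited I] (M : PACost Q (I × O))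
    (h : OWins (constDF 0) M.Lang) :
    ∃ τO : List I → O, OWinning (constDF 0) M.Lang τO ∧
      stratCost M.wCost (constDF 0) τO ≤ (Fintype.card Q : ℕ∞) := by
  obtain ⟨τ, hτ⟩ := oWins_constDF_zero_iff.1 h
  obtain ⟨X, ⟨σ, hclosed, hans⟩, hqI⟩ :=
    PACost.exists_solved_mem fun α => PACost.exists_answersWithin_of_accepting (hτ α)
  obtain ⟨τ', hτ'⟩ := PACost.exists_forall_runsIn_outcome hqI hclosed
  have hcost : ∀ α, M.wCost (PACost.outcome τ' α) ≤ (Fintype.card Q : ℕ∞) := fun α =>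
    (hans M.qI _ (hτ' α)).limsup_cor_le
  exact ⟨_, oWinning_constDF_zero_iff.2 fun α => (hcost α).trans_lt (ENat.natCast_lt_top _),
    stratCost_constDF_zero_le_iff.2 hcost⟩

/-- cost bound in the delay-free game. If Player O wins the delay-free
game `Γ_{f_0}(L(A))`, then she has a winning strategy of cost at most `2·|A|`. -/
theorem statement19 {Q I O : Type} [Fintype Q] [Fintype I] [Fintype O] [Inhabited I]
    (M : PACost Q (I × O)) (h : OWins (constDF 0) M.Lang) :
    ∃ τO : List I → O, OWinning (constDF 0) M.Lang τO ∧
      stratCost M.wCost (constDF 0) τO ≤ ((2 * Fintype.card Q : ℕ) : ℕ∞) := by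
  obtain ⟨τO, hτO, hcost⟩ := statement19_general M h
  exact ⟨τO, hτO, hcost.trans (Nat.cast_le.2 (Nat.le_mul_of_pos_left _ two_pos))⟩
end
end
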